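/- Let Ω ⊆ ℝ^d (d ≥ 2) be a compact convex polytope with positive Lebesgue measure that is not centrally symmetric, and let g = |Ω|^{-1/2} χ_Ω. Then, after applying a suitable invertible affine transformation to Ω, there exist ε > 0, R > 0, and δ > 0 such that for all t ∈ ℝ^d with |t| < ε and all λ ∈ S(2δ) \ B_R(0), where S(r) = { s e_1 + w : s ∈ ℝ, w ∈ ℝ^d, |w| < r } is the open cylinder of radius r about the x_1-axis and B_R(0) the open ball of radius R about the origin, one has V_g g(t, λ) ≠ 0. -/

import Mathlib

open MeasureTheory Complex
open scoped Real ComplexConjugate InnerProductSpace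

/-!
A full-dimensional polytope `K` is an intersection of tight slabs `l j ≤ φ j x ≤ h j` with pairwise
non-parallel functionals `φ j`. Suppose that in every direction `φ j` the two opposite facets have
the same volume. Then the shifts `(l + s c, h + s c)` of the slabs leave the volume stationary at
`s = 0`, so by log-concavity (Prékopa–Leindler) `K` has the largest volume among all shifted bodies.
The body with centred slabs contains `(K - K) / 2`, so this is the equality case of Brunn–Minkowski.
Comparing sections orthogonal to `φ j` shows that the section volumes are symmetric about
`(l j + h j) / 2`, whence the barycentre is a centre of symmetry of `K`.

So if `K` is not centrally symmetric, some `φ i` has opposite facets of different volumes; rotate it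
to the first coordinate. Up to a constant, `V_g g(t, λ)` is the Fourier transform of `K ∩ (t + K)`.
Integrating in `x₁` turns `2πiσ` times it, `σ = -λ₁`, into a sum over facets. Facets which are not
orthogonal to `e₁` contribute `o(1)` by Riemann–Lebesgue, whereas the moduli of the contributions of
the two facets orthogonal to `e₁` tend to different volumes, so that the sum cannot vanish.
-/

section PrekopaLeindler

open Set Filter Topology
open scoped ENNReal Pointwise

theorem volume_add_volume_le_volume_add_of_isCompact {A B : Set ℝ} (hA : IsCompact A)
    (hB : IsCompact B) (hA₀ : A.Nonempty) (hB₀ : B.Nonempty) :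
    volume A + volume B ≤ volume (A + B) := by
  obtain ⟨a, ha, ha_max⟩ := hA.exists_isGreatest hA₀
  obtain ⟨b, hb, hb_min⟩ := hB.exists_isLeast hB₀
  have hsub : (b +ᵥ A) ∪ (a +ᵥ B) ⊆ A + B := by
    refine union_subset ?_ (vadd_set_subset_add ha)
    rw [add_comm A B]
    exact vadd_set_subset_add hb
  have hdisj : volume ((b +ᵥ A) ∩ (a +ᵥ B)) = 0 := by
    refine measure_mono_null (t := {a + b}) ?_ Real.volume_singleton
    rintro _ ⟨⟨x, hx, rfl⟩, y, hy, hxy⟩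
    have hxa := ha_max hx
    have hby := hb_min hy
    simp only [vadd_eq_add] at hxy
    simp only [vadd_eq_add, mem_singleton_iff]
    linarith
  calc volume A + volume B = volume (b +ᵥ A) + volume (a +ᵥ B) := by
        rw [measure_vadd, measure_vadd]
    _ = volume ((b +ᵥ A) ∪ (a +ᵥ B)) := by
        rw [← measure_union_add_inter _ (hB.vadd a).measurableSet, hdisj, add_zero]
    _ ≤ volume (A + B) := measure_mono hsub

theorem volume_add_volume_le_volume_add {A B : Set ℝ} (hA : MeasurableSet A)
    (hB : MeasurableSet B) (hA₀ : A.Nonempty) (hB₀ : B.Nonempty) :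
    volume A + volume B ≤ volume (A + B) := by
  obtain ⟨a, ha⟩ := hA₀
  obtain ⟨b, hb⟩ := hB₀
  rw [hA.measure_eq_iSup_isCompact, hB.measure_eq_iSup_isCompact]
  simp only [iSup_and']
  refine ENNReal.biSup_add_biSup_le' ⟨∅, empty_subset A, isCompact_empty⟩
    ⟨∅, empty_subset B, isCompact_empty⟩ ?_
  rintro K ⟨hKA, hK⟩ L ⟨hLB, hL⟩
  calc volume K + volume L ≤ volume (insert a K) + volume (insert b L) := by
        gcongr <;> exact subset_insert _ _
    _ ≤ volume (insert a K + insert b L) :=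
        volume_add_volume_le_volume_add_of_isCompact (hK.insert a) (hL.insert b)
          (insert_nonempty _ _) (insert_nonempty _ _)
    _ ≤ volume (A + B) :=
        measure_mono (add_subset_add (insert_subset ha hKA) (insert_subset hb hLB))

/-- The Prékopa–Leindler inequality for the measure `μ`, restricted to midpoints and stated with
the geometric mean squared. -/
def MidpointPrekopaLeindler {X : Type*} [AddCommGroup X] [Module ℝ X] [MeasurableSpace X]
    (μ : Measure X) : Prop :=
  ∀ ⦃f g h : X → ℝ≥0∞⦄, Measurable f → Measurable g → Measurable h →
    (∀ x y, f x * g y ≤ h (midpoint ℝ x y) ^ 2) →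
    (∫⁻ x, f x ∂μ) * (∫⁻ x, g x ∂μ) ≤ (∫⁻ x, h x ∂μ) ^ 2

theorem mul_le_sq_of_add_le_two_mul {x y z : ℝ≥0∞} (h : x + y ≤ 2 * z) : x * y ≤ z ^ 2 := by
  rcases eq_or_ne z ∞ with rfl | hz
  · simp
  have hxy : x + y ≠ ∞ := ne_top_of_le_ne_top (ENNReal.mul_ne_top ENNReal.ofNat_ne_top hz) h
  lift x to NNReal using ne_top_of_le_ne_top hxy le_self_add
  lift y to NNReal using ne_top_of_le_ne_top hxy le_add_self
  lift z to NNReal using hz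
  norm_cast at h ⊢
  rw [← NNReal.coe_le_coe] at h ⊢
  push_cast at h ⊢
  nlinarith [sq_nonneg ((x : ℝ) - y), x.2, y.2]

theorem lintegral_add_lintegral_le_of_le_one {F G H : ℝ → ℝ} (hF : Measurable F)
    (hG : Measurable G) (hH : Measurable H) (hF₀ : 0 ≤ F) (hG₀ : 0 ≤ G) (hH₀ : 0 ≤ H)
    (hF₁ : IsLUB (range F) 1) (hG₁ : IsLUB (range G) 1)
    (h : ∀ x y, F x * G y ≤ H (midpoint ℝ x y) ^ 2) :
    (∫⁻ x, ENNReal.ofReal (F x)) + ∫⁻ x, ENNReal.ofReal (G x) ≤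
      2 * ∫⁻ x, ENNReal.ofReal (H x) := by
  have layercake {K : ℝ → ℝ} (hK : Measurable K) (hK₀ : 0 ≤ K) :
      ∫⁻ x, ENNReal.ofReal (K x) = ∫⁻ t in Ioi 0, volume {x | t < K x} :=
    lintegral_eq_lintegral_meas_lt volume (Eventually.of_forall hK₀) hK.aemeasurable
  have hmeas : Measurable fun t ↦ volume {x | t < F x} :=
    Antitone.measurable fun _ _ hst ↦ measure_mono fun _ hx ↦ hst.trans_lt hx
  rw [layercake hF hF₀, layercake hG hG₀, layercake hH hH₀,
    ← lintegral_const_mul' _ _ ENNReal.ofNat_ne_top, ← lintegral_add_left hmeas]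
  refine setLIntegral_mono' measurableSet_Ioi fun t (ht₀ : 0 < t) ↦ ?_
  rcases lt_or_ge t 1 with ht₁ | ht₁
  · have hsub : {x | t < F x} + {y | t < G y} ⊆ (2 : ℝ) • {z | t < H z} := by
      rintro _ ⟨x, hx, y, hy, rfl⟩
      refine ⟨midpoint ℝ x y, lt_of_pow_lt_pow_left₀ 2 (hH₀ _) ?_, ?_⟩
      · rw [sq]
        exact (mul_lt_mul'' hx hy ht₀.le ht₀.le).trans_le (h x y)
      · simp [midpoint_eq_smul_add]
    obtain ⟨_, ⟨x, rfl⟩, hx, -⟩ := hF₁.exists_between ht₁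
    obtain ⟨_, ⟨y, rfl⟩, hy, -⟩ := hG₁.exists_between ht₁
    calc volume {x | t < F x} + volume {y | t < G y}
        ≤ volume ({x | t < F x} + {y | t < G y}) :=
          volume_add_volume_le_volume_add (measurableSet_lt measurable_const hF)
            (measurableSet_lt measurable_const hG) ⟨x, hx⟩ ⟨y, hy⟩
      _ ≤ volume ((2 : ℝ) • {z | t < H z}) := measure_mono hsub
      _ = 2 * volume {z | t < H z} := by simp [Measure.addHaar_smul]
  · have empty {K : ℝ → ℝ} (hK : IsLUB (range K) 1) : {x | t < K x} = ∅ :=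
      eq_empty_of_forall_notMem fun x hx ↦
        (ht₁.trans_lt hx).not_ge (hK.1 (mem_range_self x))
    simp [empty hF₁, empty hG₁]

theorem lintegral_mul_lintegral_le_sq_of_bddAbove {F G H : ℝ → ℝ} (hF : Measurable F)
    (hG : Measurable G) (hH : Measurable H) (hF₀ : 0 ≤ F) (hG₀ : 0 ≤ G) (hH₀ : 0 ≤ H)
    (hFb : BddAbove (range F)) (hGb : BddAbove (range G))
    (h : ∀ x y, F x * G y ≤ H (midpoint ℝ x y) ^ 2) :
    (∫⁻ x, ENNReal.ofReal (F x)) * ∫⁻ x, ENNReal.ofReal (G x) ≤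
      (∫⁻ x, ENNReal.ofReal (H x)) ^ 2 := by
  have zero_or_pos {K : ℝ → ℝ} (hK₀ : 0 ≤ K) (hKb : BddAbove (range K)) :
      (∀ x, K x = 0) ∨ 0 < sSup (range K) := by
    refine or_iff_not_imp_right.2 fun hsup x ↦ ?_
    exact le_antisymm ((le_csSup hKb (mem_range_self x)).trans (not_lt.1 hsup)) (hK₀ x)
  rcases zero_or_pos hF₀ hFb with hF' | ha
  · simp [hF']
  rcases zero_or_pos hG₀ hGb with hG' | hb
  · simp [hG']
  have isLUB_div {K : ℝ → ℝ} (hKb : BddAbove (range K)) (hk : 0 < sSup (range K)) :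
      IsLUB (range fun x ↦ K x / sSup (range K)) 1 := by
    have hlub := (OrderIso.divRight₀ _ hk).isLUB_image'.2 (isLUB_csSup (range_nonempty K) hKb)
    rwa [← range_comp, OrderIso.divRight₀_apply, div_self hk.ne'] at hlub
  have scale {K : ℝ → ℝ} (hK : Measurable K) {k : ℝ} (hk : 0 < k) :
      ENNReal.ofReal k * ∫⁻ x, ENNReal.ofReal (K x / k) = ∫⁻ x, ENNReal.ofReal (K x) := by
    rw [← lintegral_const_mul _ (by fun_prop)]
    simp only [← ENNReal.ofReal_mul hk.le, mul_div_cancel₀ _ hk.ne']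
  set a := sSup (range F)
  set b := sSup (range G)
  have hc : 0 < √(a * b) := by positivity
  have hc2 : √(a * b) ^ 2 = a * b := Real.sq_sqrt (by positivity)
  have hsum := lintegral_add_lintegral_le_of_le_one (H := fun x ↦ H x / √(a * b))
    (hF.div_const a) (hG.div_const b) (hH.div_const _) (fun x ↦ div_nonneg (hF₀ x) ha.le)
    (fun x ↦ div_nonneg (hG₀ x) hb.le) (fun x ↦ div_nonneg (hH₀ x) hc.le)
    (isLUB_div hFb ha) (isLUB_div hGb hb) fun x y ↦ by
      rw [div_mul_div_comm, div_pow, hc2]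
      gcongr
      exact h x y
  rw [← scale hF ha, ← scale hG hb, ← scale hH hc, mul_pow, mul_mul_mul_comm,
    ← ENNReal.ofReal_mul ha.le, ← ENNReal.ofReal_pow hc.le, hc2]
  gcongr
  exact mul_le_sq_of_add_le_two_mul hsum

theorem lintegral_eq_iSup_lintegral_min {X : Type*} [MeasurableSpace X] {μ : Measure X}
    {f : X → ℝ≥0∞} (hf : Measurable f) : ∫⁻ x, f x ∂μ = ⨆ N : ℕ, ∫⁻ x, min (f x) N ∂μ := by
  rw [← lintegral_iSup (fun N ↦ by fun_prop) fun N M hNM x ↦ by dsimp only; gcongr]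
  refine lintegral_congr fun x ↦ ?_
  simpa [ENNReal.iSup_natCast] using (inf_iSup_eq (f x) fun N : ℕ ↦ (N : ℝ≥0∞))

theorem midpointPrekopaLeindler_real : MidpointPrekopaLeindler (volume : Measure ℝ) := by
  intro f g h hf hg hh H
  have truncated (N : ℕ) :
      (∫⁻ x, min (f x) N) * (∫⁻ x, min (g x) N) ≤ (∫⁻ x, min (h x) N) ^ 2 := by
    have ne_top (k : ℝ → ℝ≥0∞) (x : ℝ) : min (k x) N ≠ ∞ :=
      ne_top_of_le_ne_top (ENNReal.natCast_ne_top N) (min_le_right _ _)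
    have bdd (k : ℝ → ℝ≥0∞) : BddAbove (range fun x ↦ (min (k x) N).toReal) := by
      refine ⟨N, forall_mem_range.2 fun x ↦ ?_⟩
      simpa using ENNReal.toReal_mono (ENNReal.natCast_ne_top N) (min_le_right (k x) N)
    have key := lintegral_mul_lintegral_le_sq_of_bddAbove
      (F := fun x ↦ (min (f x) N).toReal) (G := fun x ↦ (min (g x) N).toReal)
      (H := fun x ↦ (min (h x) N).toReal) (by fun_prop) (by fun_prop) (by fun_prop)
      (fun _ ↦ ENNReal.toReal_nonneg) (fun _ ↦ ENNReal.toReal_nonneg)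
      (fun _ ↦ ENNReal.toReal_nonneg) (bdd f) (bdd g) fun x y ↦ ?_
    · simpa only [ENNReal.ofReal_toReal (ne_top _ _)] using key
    rw [← ENNReal.toReal_mul, ← ENNReal.toReal_pow]
    refine ENNReal.toReal_mono (ENNReal.pow_ne_top (ne_top _ _)) ?_
    rcases le_total (h (midpoint ℝ x y)) N with hN | hN
    · rw [min_eq_left hN]
      refine le_trans ?_ (H x y)
      gcongr <;> exact min_le_left _ _
    · rw [min_eq_right hN, sq]
      gcongr <;> exact min_le_right _ _
  rw [lintegral_eq_iSup_lintegral_min hf, lintegral_eq_iSup_lintegral_min hg, ENNReal.iSup_mul]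
  refine iSup_le fun N ↦ ?_
  rw [ENNReal.mul_iSup]
  refine iSup_le fun M ↦ ?_
  calc (∫⁻ x, min (f x) N) * (∫⁻ x, min (g x) M)
      ≤ (∫⁻ x, min (f x) (max N M : ℕ)) * (∫⁻ x, min (g x) (max N M : ℕ)) := by
        gcongr <;> simp
    _ ≤ (∫⁻ x, min (h x) (max N M : ℕ)) ^ 2 := truncated _
    _ ≤ (∫⁻ x, h x) ^ 2 := by gcongr; exact min_le_left _ _

variable {X Y : Type*} [AddCommGroup X] [Module ℝ X] [MeasurableSpace X] [AddCommGroup Y]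
  [Module ℝ Y] [MeasurableSpace Y] {μ : Measure X} {ν : Measure Y}

theorem MidpointPrekopaLeindler.prod [SFinite ν] (hμ : MidpointPrekopaLeindler μ)
    (hν : MidpointPrekopaLeindler ν) : MidpointPrekopaLeindler (μ.prod ν) := by
  intro f g h hf hg hh H
  rw [lintegral_prod _ hf.aemeasurable, lintegral_prod _ hg.aemeasurable,
    lintegral_prod _ hh.aemeasurable]
  refine hμ hf.lintegral_prod_right' hg.lintegral_prod_right' hh.lintegral_prod_right'
    fun x y ↦ ?_
  refine hν (by fun_prop) (by fun_prop) (by fun_prop) fun z w ↦ ?_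
  exact H (x, z) (y, w)

theorem MidpointPrekopaLeindler.of_measurePreserving (hμ : MidpointPrekopaLeindler μ)
    (L : X →ₗ[ℝ] Y) (hL : MeasurePreserving L μ ν) : MidpointPrekopaLeindler ν := by
  intro f g h hf hg hh H
  rw [← hL.lintegral_comp hf, ← hL.lintegral_comp hg, ← hL.lintegral_comp hh]
  refine hμ (hf.comp hL.measurable) (hg.comp hL.measurable) (hh.comp hL.measurable)
    fun x y ↦ ?_
  rw [← LinearMap.coe_toAffineMap, AffineMap.map_midpoint]
  exact H _ _

theorem MidpointPrekopaLeindler.measure_mul_le_sq (hμ : MidpointPrekopaLeindler μ) {A B M : Set X}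
    (hA : MeasurableSet A) (hB : MeasurableSet B) (hM : MeasurableSet M)
    (h : ∀ a ∈ A, ∀ b ∈ B, midpoint ℝ a b ∈ M) : μ A * μ B ≤ μ M ^ 2 := by
  rw [← lintegral_indicator_one hA, ← lintegral_indicator_one hB, ← lintegral_indicator_one hM]
  refine hμ (measurable_one.indicator hA) (measurable_one.indicator hB)
    (measurable_one.indicator hM) fun x y ↦ ?_
  by_cases hx : x ∈ A <;> by_cases hy : y ∈ B <;> simp_all

theorem midpointPrekopaLeindler_pi (n : ℕ) :
    MidpointPrekopaLeindler (volume : Measure (Fin n → ℝ)) := by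
  induction n with
  | zero =>
    intro f g h _ _ _ H
    have hvol : (volume : Measure (Fin 0 → ℝ)) univ = 1 := by simp [volume_pi]
    simp only [lintegral_unique, hvol, mul_one]
    refine (H _ _).trans_eq ?_
    congr!
  | succ n ih =>
    refine (midpointPrekopaLeindler_real.prod ih).of_measurePreserving
      (Fin.consLinearEquiv ℝ fun _ ↦ ℝ).toLinearMap ?_
    convert! (volume_preserving_piFinSuccAbove (fun _ : Fin (n + 1) ↦ ℝ) 0).symm using 1
    ext p i
    refine Fin.cases ?_ (fun i ↦ ?_) i <;> simp [MeasurableEquiv.piFinSuccAbove]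

theorem midpointPrekopaLeindler_euclideanSpace (n : ℕ) :
    MidpointPrekopaLeindler (volume : Measure (EuclideanSpace ℝ (Fin n))) :=
  (midpointPrekopaLeindler_pi n).of_measurePreserving
    (WithLp.linearEquiv 2 ℝ (Fin n → ℝ)).symm.toLinearMap (PiLp.volume_preserving_toLp _)

end PrekopaLeindler

section HalfspaceRepresentation

open Set Filter Topology
open scoped Pointwise LinearAlgebra.Projectivization

variable {E : Type*} [NormedAddCommGroup E] [NormedSpace ℝ E]

/-- The one-sided polar of `s`: the continuous functionals bounded above by `1` on `s`. Unlike
`StrongDual.polar` it bounds `f x` and not `‖f x‖`. -/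
def oneSidedPolar (s : Set E) : Set (StrongDual ℝ E) :=
  {f | ∀ x ∈ s, f x ≤ 1}

theorem oneSidedPolar_eq_iInter (s : Set E) :
    oneSidedPolar s = ⋂ x ∈ s, {f : StrongDual ℝ E | f x ≤ 1} := by
  ext f
  simp [oneSidedPolar]

theorem convex_oneSidedPolar (s : Set E) : Convex ℝ (oneSidedPolar s) := by
  rw [oneSidedPolar_eq_iInter]
  exact convex_iInter₂ fun x _ ↦
    convex_halfSpace_le (ContinuousLinearMap.apply ℝ ℝ x).isLinear 1

theorem isClosed_oneSidedPolar (s : Set E) : IsClosed (oneSidedPolar s) := by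
  rw [oneSidedPolar_eq_iInter]
  exact isClosed_biInter fun x _ ↦
    isClosed_le (ContinuousLinearMap.apply ℝ ℝ x).continuous continuous_const

theorem oneSidedPolar_convexHull (s : Set E) :
    oneSidedPolar (convexHull ℝ s) = oneSidedPolar s := by
  refine Subset.antisymm (fun f hf x hx ↦ hf x (subset_convexHull ℝ s hx)) fun f hf ↦ ?_
  exact fun x hx ↦ convexHull_min hf (convex_halfSpace_le f.isLinear 1) hx

theorem isBounded_oneSidedPolar {s : Set E} (hs : s ∈ 𝓝 0) :
    Bornology.IsBounded (oneSidedPolar s) := by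
  have hneg : -s ∈ 𝓝 (0 : E) := by simpa using neg_mem_nhds_zero E hs
  refine (NormedSpace.isBounded_polar_of_mem_nhds_zero ℝ (inter_mem hs hneg)).subset ?_
  intro f hf x hx
  have hfx : f x ≤ 1 := hf x hx.1
  have hfnx : -f x ≤ 1 := by simpa using hf (-x) hx.2
  exact abs_le.2 ⟨neg_le.1 hfnx, hfx⟩

theorem mem_of_forall_oneSidedPolar_le_one {K : Set E} (hK : Convex ℝ K) (hKc : IsClosed K)
    (h0 : (0 : E) ∈ K) {x : E} (hx : ∀ f ∈ oneSidedPolar K, f x ≤ 1) : x ∈ K := by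
  by_contra hxK
  obtain ⟨f, c, hfK, hfx⟩ := geometric_hahn_banach_closed_point hK hKc hxK
  have hc : 0 < c := by simpa using hfK 0 h0
  have hmem : c⁻¹ • f ∈ oneSidedPolar K := fun y hy ↦ by
    simpa [inv_mul_le_iff₀ hc] using (hfK y hy).le
  have hle : f x ≤ c := by simpa [inv_mul_le_iff₀ hc] using hx _ hmem
  exact hfx.not_ge hle

theorem eventually_add_smul_mem_oneSidedPolar {s : Set E} (hs : s.Finite) {f w : StrongDual ℝ E}
    (hf : f ∈ oneSidedPolar s) (hw : ∀ x ∈ s, f x = 1 → w x = 0) :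
    ∀ᶠ ε in 𝓝 (0 : ℝ), f + ε • w ∈ oneSidedPolar s := by
  refine hs.eventually_all.2 fun x hx ↦ ?_
  rcases (hf x hx).eq_or_lt with hfx | hfx
  · exact Eventually.of_forall fun ε ↦ by simp [hfx, hw x hx hfx]
  · have hcont : Tendsto (fun ε : ℝ ↦ (f + ε • w) x) (𝓝 0) (𝓝 (f x)) :=
      Continuous.tendsto' (by fun_prop) _ _ (by simp)
    exact (hcont.eventually_lt_const hfx).mono fun _ h ↦ h.le

-- An extreme point is determined by its active constraints.
theorem finite_extremePoints_oneSidedPolar {s : Set E} (hs : s.Finite) :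
    ((oneSidedPolar s).extremePoints ℝ).Finite := by
  refine Finite.of_finite_image (f := fun f ↦ {x ∈ s | f x = 1})
    (hs.finite_subsets.subset (image_subset_iff.2 fun f _ ↦ sep_subset _ _)) ?_
  intro f hf g _ hfg
  have hactive : ∀ x ∈ s, f x = 1 → (g - f) x = 0 := fun x hx hfx ↦ by
    have hgx : x ∈ {x ∈ s | g x = 1} := (Set.ext_iff.1 hfg x).1 ⟨hx, hfx⟩
    simp [hfx, hgx.2]
  obtain ⟨ε, hε, hmem⟩ := Metric.eventually_nhds_iff.1
    (eventually_add_smul_mem_oneSidedPolar hs hf.1 hactive)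
  have hplus : f + (ε / 2) • (g - f) ∈ oneSidedPolar s :=
    hmem (by simp [abs_of_pos hε, hε])
  have hminus : f + (-(ε / 2)) • (g - f) ∈ oneSidedPolar s :=
    hmem (by simp [abs_of_pos hε, hε])
  have heq : f + (ε / 2) • (g - f) = f :=
    hf.2 hplus hminus ⟨1 / 2, 1 / 2, by norm_num, by norm_num, by norm_num, by module⟩
  have hzero : g - f = 0 := by simpa [hε.ne'] using heq
  exact (sub_eq_zero.1 hzero).symm

variable [FiniteDimensional ℝ E]

theorem convexHull_eq_halfspaces_of_zero_mem_interior {s : Set E} (hs : s.Finite)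
    (h0 : (0 : E) ∈ interior (convexHull ℝ s)) :
    convexHull ℝ s = {x | ∀ f ∈ (oneSidedPolar s).extremePoints ℝ, f x ≤ 1} := by
  have hcompact : IsCompact (oneSidedPolar s) := by
    refine Metric.isCompact_of_isClosed_isBounded (isClosed_oneSidedPolar s) ?_
    rw [← oneSidedPolar_convexHull]
    exact isBounded_oneSidedPolar (mem_interior_iff_mem_nhds.1 h0)
  refine Subset.antisymm (fun x hx f hf ↦ ?_) fun x hx ↦ ?_
  · have hf' := hf.1
    rw [← oneSidedPolar_convexHull] at hf'
    exact hf' x hx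
  · refine mem_of_forall_oneSidedPolar_le_one (convex_convexHull ℝ s)
      (hs.isCompact_convexHull ℝ).isClosed (interior_subset h0) fun f hf ↦ ?_
    rw [oneSidedPolar_convexHull,
      ← closure_convexHull_extremePoints hcompact (convex_oneSidedPolar s)] at hf
    exact closure_minimal (convexHull_min hx
      (convex_halfSpace_le (ContinuousLinearMap.apply ℝ ℝ x).isLinear 1))
      (isClosed_le (ContinuousLinearMap.apply ℝ ℝ x).continuous continuous_const) hf

theorem exists_finite_halfspaces_of_interior_nonempty {s : Set E} (hs : s.Finite)
    (hne : (interior (convexHull ℝ s)).Nonempty) :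
    ∃ F : Set (StrongDual ℝ E), F.Finite ∧ ∃ c : StrongDual ℝ E → ℝ,
      convexHull ℝ s = {x | ∀ f ∈ F, f x ≤ c f} := by
  obtain ⟨x₀, hx₀⟩ := hne
  have hzero : (0 : E) ∈ interior (convexHull ℝ (-x₀ +ᵥ s)) := by
    rw [convexHull_vadd, interior_vadd]
    exact ⟨x₀, hx₀, by simp⟩
  refine ⟨_, finite_extremePoints_oneSidedPolar (hs.vadd_set (a := -x₀)), fun f ↦ 1 + f x₀, ?_⟩
  ext x
  rw [← vadd_mem_vadd_set_iff (a := -x₀), ← convexHull_vadd,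
    convexHull_eq_halfspaces_of_zero_mem_interior hs.vadd_set hzero]
  simp [add_comm]

end HalfspaceRepresentation

section Slabs

open Set Filter Topology
open scoped LinearAlgebra.Projectivization

variable {E : Type*} [NormedAddCommGroup E] [NormedSpace ℝ E] {ι : Type*}

/-- The intersection of the slabs `l j ≤ φ j x ≤ h j`. -/
def slab (φ : ι → StrongDual ℝ E) (l h : ι → ℝ) : Set E :=
  {x | ∀ j, φ j x ∈ Icc (l j) (h j)}

theorem exists_pairwise_nonparallel_unit_vectors {F : Set E} (hF : F.Finite) (hF₀ : 0 ∉ F) :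
    ∃ P : Finset E, (∀ v : P, ‖(v : E)‖ = 1) ∧
      (Pairwise fun v w : P ↦ ∀ t : ℝ, (v : E) ≠ t • (w : E)) ∧
      ∀ u ∈ F, ∃ v : P, ∃ t : ℝ, u = t • (v : E) := by
  classical
  let unitRep (p : ℙ ℝ E) : E := ‖p.rep‖⁻¹ • p.rep
  have norm_unitRep (p : ℙ ℝ E) : ‖unitRep p‖ = 1 := norm_smul_inv_norm (𝕜 := ℝ) p.rep_nonzero
  have unitRep_ne (p : ℙ ℝ E) : unitRep p ≠ 0 := fun h ↦ by simpa [h] using norm_unitRep p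
  have mk_unitRep (p : ℙ ℝ E) : Projectivization.mk ℝ (unitRep p) (unitRep_ne p) = p := by
    conv_rhs => rw [← p.mk_rep]
    exact (Projectivization.mk_eq_mk_iff' ℝ _ _ _ _).2 ⟨_, rfl⟩
  let Q : Set (ℙ ℝ E) :=
    range fun u : F ↦ Projectivization.mk ℝ (u : E) (ne_of_mem_of_not_mem u.2 hF₀)
  have hQ : Q.Finite := have := hF.to_subtype; finite_range _
  refine ⟨(hQ.image unitRep).toFinset, fun ⟨v, hv⟩ ↦ ?_, fun ⟨v, hv⟩ ⟨w, hw⟩ hne t htw ↦ ?_,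
    fun u hu ↦ ?_⟩
  · obtain ⟨p, -, rfl⟩ := (hQ.image unitRep).mem_toFinset.1 hv
    exact norm_unitRep p
  · obtain ⟨p, -, rfl⟩ := (hQ.image unitRep).mem_toFinset.1 hv
    obtain ⟨q, -, rfl⟩ := (hQ.image unitRep).mem_toFinset.1 hw
    have hpq : p = q := by
      rw [← mk_unitRep p, ← mk_unitRep q]
      exact (Projectivization.mk_eq_mk_iff' ℝ _ _ _ _).2 ⟨t, htw.symm⟩
    exact hne (Subtype.ext (congrArg unitRep hpq))
  · have hu₀ : u ≠ 0 := ne_of_mem_of_not_mem hu hF₀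
    have hmem : unitRep (.mk ℝ u hu₀) ∈ (hQ.image unitRep).toFinset :=
      (hQ.image unitRep).mem_toFinset.2 (mem_image_of_mem _ ⟨⟨u, hu⟩, rfl⟩)
    obtain ⟨t, ht⟩ := (Projectivization.mk_eq_mk_iff' ℝ u _ hu₀ (unitRep_ne _)).1
      (mk_unitRep (.mk ℝ u hu₀)).symm
    exact ⟨⟨_, hmem⟩, t, ht.symm⟩

theorem injective_pi_of_isBounded_slab {φ : ι → StrongDual ℝ E} {l h : ι → ℝ}
    (hne : (slab φ l h).Nonempty) (hb : Bornology.IsBounded (slab φ l h)) :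
    Function.Injective (ContinuousLinearMap.pi φ) := by
  refine (injective_iff_map_eq_zero _).2 fun x hx ↦ ?_
  by_contra hx₀
  obtain ⟨y, hy⟩ := hne
  obtain ⟨C, hC⟩ := hb.exists_norm_le
  have hline (s : ℝ) : y + s • x ∈ slab φ l h := fun j ↦ by
    have hj : φ j x = 0 := congrFun hx j
    simpa [hj] using hy j
  have hx_pos : 0 < ‖x‖ := norm_pos_iff.2 hx₀
  have hfar : ‖((2 * C + 1) / ‖x‖) • x‖ ≤ 2 * C := by
    calc ‖((2 * C + 1) / ‖x‖) • x‖ = ‖(y + ((2 * C + 1) / ‖x‖) • x) - y‖ := by simp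
      _ ≤ ‖y + ((2 * C + 1) / ‖x‖) • x‖ + ‖y‖ := norm_sub_le _ _
      _ ≤ 2 * C := by linarith [hC _ (hline ((2 * C + 1) / ‖x‖)), hC y hy]
  rw [norm_smul, norm_div, norm_norm, div_mul_cancel₀ _ hx_pos.ne', Real.norm_eq_abs] at hfar
  linarith [le_abs_self (2 * C + 1)]

variable [FiniteDimensional ℝ E]

theorem isBounded_slab [Finite ι] {φ : ι → StrongDual ℝ E}
    (hφ : Function.Injective (ContinuousLinearMap.pi φ)) (l h : ι → ℝ) :
    Bornology.IsBounded (slab φ l h) := by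
  cases nonempty_fintype ι
  obtain ⟨C, -, hC⟩ := (ContinuousLinearMap.pi φ).toLinearMap.exists_antilipschitzWith
    (LinearMap.ker_eq_bot.2 hφ)
  refine (hC.isBounded_preimage (Metric.isBounded_Icc l h)).subset fun x hx ↦ ?_
  exact ⟨fun j ↦ (hx j).1, fun j ↦ (hx j).2⟩

theorem exists_tight_slab_of_interior_nonempty {s : Set E} (hs : s.Finite)
    (hne : (interior (convexHull ℝ s)).Nonempty) :
    ∃ P : Finset (StrongDual ℝ E), (∀ f : P, ‖(f : StrongDual ℝ E)‖ = 1) ∧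
      (Pairwise fun f g : P ↦ ∀ t : ℝ, (f : StrongDual ℝ E) ≠ t • (g : StrongDual ℝ E)) ∧
      ∃ l h : P → ℝ, convexHull ℝ s = slab (↑) l h ∧
        ∀ f : P, IsLeast ((f : StrongDual ℝ E) '' convexHull ℝ s) (l f) ∧
          IsGreatest ((f : StrongDual ℝ E) '' convexHull ℝ s) (h f) := by
  obtain ⟨F, hF, c, hFc⟩ := exists_finite_halfspaces_of_interior_nonempty hs hne
  obtain ⟨x₀, hx₀⟩ : (convexHull ℝ s).Nonempty := hne.mono interior_subset
  obtain ⟨P, hP₁, hPne, hFP⟩ :=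
    exists_pairwise_nonparallel_unit_vectors (hF.sdiff (t := {0})) (by simp)
  have himage (f : StrongDual ℝ E) : IsCompact (f '' convexHull ℝ s) :=
    (hs.isCompact_convexHull ℝ).image f.continuous
  have himage_ne (f : StrongDual ℝ E) : (f '' convexHull ℝ s).Nonempty := ⟨_, x₀, hx₀, rfl⟩
  choose l hl using fun f ↦ (himage f).exists_isLeast (himage_ne f)
  choose h hh using fun f ↦ (himage f).exists_isGreatest (himage_ne f)
  refine ⟨P, hP₁, hPne, fun f ↦ l f, fun f ↦ h f, ?_, fun f ↦ ⟨hl f, hh f⟩⟩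
  refine Subset.antisymm (fun x hx f ↦ ⟨(hl f).2 ⟨x, hx, rfl⟩, (hh f).2 ⟨x, hx, rfl⟩⟩) fun x hx ↦ ?_
  suffices ∀ f ∈ F, ∃ y ∈ convexHull ℝ s, f x ≤ f y by
    rw [hFc]
    intro f hf
    obtain ⟨y, hy, hxy⟩ := this f hf
    rw [hFc] at hy
    exact hxy.trans (hy f hf)
  intro f hf
  rcases eq_or_ne f 0 with rfl | hf₀
  · exact ⟨x₀, hx₀, by simp⟩
  obtain ⟨v, t, rfl⟩ := hFP f ⟨hf, by simpa using hf₀⟩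
  obtain ⟨y, hy, hly⟩ := (hl v).1
  obtain ⟨z, hz, hhz⟩ := (hh v).1
  rcases le_total 0 t with ht | ht
  · exact ⟨z, hz, mul_le_mul_of_nonneg_left ((hx v).2.trans_eq hhz.symm) ht⟩
  · exact ⟨y, hy, mul_le_mul_of_nonpos_left (hly.trans_le (hx v).1) ht⟩

end Slabs

section Polyhedra

open Set Filter Topology

variable {E : Type*} [NormedAddCommGroup E] [NormedSpace ℝ E] {ι κ : Type*}

/-- The polyhedron `ψ k x ≤ c k`. -/
def polyhedron (ψ : κ → StrongDual ℝ E) (c : κ → ℝ) : Set E :=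
  {x | ∀ k, ψ k x ≤ c k}

theorem isClosed_polyhedron (ψ : κ → StrongDual ℝ E) (c : κ → ℝ) : IsClosed (polyhedron ψ c) := by
  simp only [polyhedron, ofPred_forall]
  exact isClosed_iInter fun k ↦ isClosed_le (ψ k).continuous continuous_const

theorem eventually_polyhedron_subset [Finite κ] (ψ : κ → StrongDual ℝ E) (c₀ : κ → ℝ) :
    ∀ᶠ c in 𝓝 c₀, polyhedron ψ c ⊆ polyhedron ψ (c₀ + 1) := by
  have hc : ∀ᶠ c in 𝓝 c₀, ∀ k, c k < (c₀ + 1) k :=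
    eventually_all.2 fun k ↦ (continuous_apply k).continuousAt.eventually_lt_const (by simp)
  filter_upwards [hc] with c hc x hx k
  exact (hx k).trans (hc k).le

theorem slab_eq_polyhedron (φ : ι → StrongDual ℝ E) (l h : ι → ℝ) :
    slab φ l h = polyhedron (Sum.elim φ (-φ)) (Sum.elim h (-l)) := by
  ext x
  simp [slab, polyhedron, forall_and, and_comm]

theorem polyhedron_sumElim_neg (φ : ι → StrongDual ℝ E) (c : ι ⊕ ι → ℝ) :
    polyhedron (Sum.elim φ (-φ)) c = slab φ (-(c ∘ Sum.inr)) (c ∘ Sum.inl) := by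
  rw [slab_eq_polyhedron, neg_neg, Sum.elim_comp_inl_inr]

theorem isClosed_slab (φ : ι → StrongDual ℝ E) (l h : ι → ℝ) : IsClosed (slab φ l h) :=
  slab_eq_polyhedron φ l h ▸ isClosed_polyhedron _ _

section Volume

variable [FiniteDimensional ℝ E] [MeasurableSpace E] [BorelSpace E]
  (μ : Measure E) [μ.IsAddHaarMeasure]

theorem ae_apply_ne (f : StrongDual ℝ E) (b : ℝ) (h : f ≠ 0 ∨ b ≠ 0) : ∀ᵐ x ∂μ, f x ≠ b := by
  rcases eq_or_ne f 0 with rfl | hf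
  · exact Eventually.of_forall fun x ↦ by simpa [eq_comm] using h
  obtain ⟨v, hv⟩ : ∃ v, f v ≠ 0 := by
    by_contra! hv
    exact hf (ContinuousLinearMap.ext hv)
  let A : AffineSubspace ℝ E := AffineSubspace.mk' ((b / f v) • v) f.ker
  have mem_A (x : E) : x ∈ A ↔ f x = b := by simp [A, sub_eq_zero, div_mul_cancel₀ b hv]
  have hA : A ≠ ⊤ := fun htop ↦ hv <| by
    have hlevel (x : E) : f x = b := (mem_A x).1 (htop ▸ AffineSubspace.mem_top ℝ E x)
    rw [hlevel, ← hlevel 0, map_zero]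
  refine measure_mono_null (fun x hx ↦ (mem_A x).2 ?_) (Measure.addHaar_affineSubspace μ A hA)
  simpa using hx

theorem eventually_le_iff_of_ne {α : Type*} {F : Filter α} {f g : α → ℝ} {a b : ℝ}
    (hf : Tendsto f F (𝓝 a)) (hg : Tendsto g F (𝓝 b)) (hab : a ≠ b) :
    ∀ᶠ x in F, f x ≤ g x ↔ a ≤ b := by
  rcases hab.lt_or_gt with hab | hab
  · filter_upwards [hf.eventually_lt hg hab] with x hx using iff_of_true hx.le hab.le
  · filter_upwards [hg.eventually_lt hf hab] with x hx using iff_of_false hx.not_ge hab.not_ge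

theorem continuous_measureReal_polyhedron [Finite κ] {ψ : κ → StrongDual ℝ E} (hψ : ∀ k, ψ k ≠ 0)
    (hb : ∀ c, Bornology.IsBounded (polyhedron ψ c)) :
    Continuous fun c ↦ μ.real (polyhedron ψ c) := by
  refine continuous_iff_continuousAt.2 fun c₀ ↦
    (ENNReal.tendsto_toReal (hb c₀).measure_lt_top.ne).comp ?_
  refine tendsto_measure_of_ae_tendsto_indicator _ (isClosed_polyhedron ψ c₀).measurableSet
    (fun c ↦ (isClosed_polyhedron ψ c).measurableSet)
    (isClosed_polyhedron ψ (c₀ + 1)).measurableSet (hb _).measure_lt_top.ne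
    (eventually_polyhedron_subset ψ c₀) ?_
  filter_upwards [ae_all_iff.2 fun k ↦ ae_apply_ne μ (ψ k) (c₀ k) (.inl (hψ k))] with x hx
  have hk : ∀ᶠ c in 𝓝 c₀, ∀ k, ψ k x ≤ c k ↔ ψ k x ≤ c₀ k := eventually_all.2 fun k ↦
    eventually_le_iff_of_ne tendsto_const_nhds (continuous_apply k).continuousAt (hx k)
  filter_upwards [hk] with c hc using forall_congr' hc

theorem continuous_measureReal_slab [Finite ι] {φ : ι → StrongDual ℝ E} (hφ : ∀ j, φ j ≠ 0)
    (hinj : Function.Injective (ContinuousLinearMap.pi φ)) :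
    Continuous fun p : (ι → ℝ) × (ι → ℝ) ↦ μ.real (slab φ p.1 p.2) := by
  simp only [slab_eq_polyhedron]
  have hpoly := continuous_measureReal_polyhedron μ (ψ := Sum.elim φ (-φ))
    (by simpa [Sum.forall] using hφ)
    fun c ↦ polyhedron_sumElim_neg φ c ▸ isBounded_slab hinj _ _
  refine hpoly.comp (continuous_pi (Sum.forall.2 ⟨fun j ↦ ?_, fun j ↦ ?_⟩)) <;>
    simp only [Sum.elim_inl, Sum.elim_inr, Pi.neg_apply] <;> fun_prop

end Volume

end Polyhedra

section CrossSections

open Set Filter Topology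

variable {Y : Type*} [NormedAddCommGroup Y] [NormedSpace ℝ Y] {ι : Type*}
  {φ : ι → StrongDual ℝ (ℝ × Y)} {i : ι}

/-- The cross-section at height `r` of the slabs `l j ≤ φ j x ≤ h j` with `j ≠ i`. It is meant for
the situation where `φ i` is the first coordinate, so that for `r ∈ [l i, h i]` it is a
cross-section of `slab φ l h` and for `r = l i`, `r = h i` it is a facet. -/
def crossSection (φ : ι → StrongDual ℝ (ℝ × Y)) (i : ι) (l h : ι → ℝ) (r : ℝ) : Set Y :=
  {y | ∀ j ≠ i, φ j (r, y) ∈ Icc (l j) (h j)}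

theorem apply_prodMk (f : StrongDual ℝ (ℝ × Y)) (r : ℝ) (y : Y) :
    f (r, y) = f (1, 0) * r + f (0, y) := by
  rw [mul_comm, ← smul_eq_mul, ← map_smul, ← map_add]
  simp

theorem crossSection_eq_slab (φ : ι → StrongDual ℝ (ℝ × Y)) (i : ι) (l h : ι → ℝ) (r : ℝ) :
    crossSection φ i l h r =
      slab (fun j : {j // j ≠ i} ↦ φ j ∘L .inr ℝ ℝ Y)
        (fun j ↦ l j - φ j (1, 0) * r) (fun j ↦ h j - φ j (1, 0) * r) := by
  ext y
  simp [crossSection, slab, apply_prodMk _ r y, le_sub_iff_add_le, add_comm]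

theorem isClosed_crossSection (φ : ι → StrongDual ℝ (ℝ × Y)) (i : ι) (l h : ι → ℝ) (r : ℝ) :
    IsClosed (crossSection φ i l h r) :=
  crossSection_eq_slab φ i l h r ▸ isClosed_slab _ _ _

theorem crossSection_update [DecidableEq ι] (φ : ι → StrongDual ℝ (ℝ × Y)) (i : ι) (l h : ι → ℝ)
    (a b r : ℝ) :
    crossSection φ i (Function.update l i a) (Function.update h i b) r =
      crossSection φ i l h r := by
  refine ext fun y ↦ forall₂_congr fun j hj ↦ ?_
  rw [Function.update_of_ne hj, Function.update_of_ne hj]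

theorem mem_slab_iff_mem_crossSection (hi : ∀ p, φ i p = p.1) {l h : ι → ℝ} {r : ℝ} {y : Y} :
    (r, y) ∈ slab φ l h ↔ r ∈ Icc (l i) (h i) ∧ y ∈ crossSection φ i l h r := by
  refine ⟨fun H ↦ ⟨by simpa [hi] using H i, fun j _ ↦ H j⟩, fun H j ↦ ?_⟩
  rcases eq_or_ne j i with rfl | hj
  · simpa [hi] using H.1
  · exact H.2 j hj

theorem comp_inr_ne_zero (hi : ∀ p, φ i p = p.1) {f : StrongDual ℝ (ℝ × Y)}
    (hf : ∀ t : ℝ, f ≠ t • φ i) : f ∘L .inr ℝ ℝ Y ≠ 0 := by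
  intro h
  refine hf (f (1, 0)) (ContinuousLinearMap.ext fun p ↦ ?_)
  have hp : f (0, p.2) = 0 := DFunLike.congr_fun h p.2
  simp [hi, apply_prodMk f p.1 p.2, hp]

theorem injective_pi_comp_inr (hi : ∀ p, φ i p = p.1)
    (hinj : Function.Injective (ContinuousLinearMap.pi φ)) :
    Function.Injective (ContinuousLinearMap.pi fun j : {j // j ≠ i} ↦ φ j ∘L .inr ℝ ℝ Y) := by
  refine (injective_iff_map_eq_zero _).2 fun y hy ↦ ?_
  have hy₀ : ((0, y) : ℝ × Y) = 0 := by
    refine (injective_iff_map_eq_zero _).1 hinj _ (funext fun j ↦ ?_)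
    rcases eq_or_ne j i with rfl | hj
    · simp [hi]
    · exact congrFun hy ⟨j, hj⟩
  simpa using hy₀

variable [Finite ι] [FiniteDimensional ℝ Y] [MeasurableSpace Y] [BorelSpace Y]
  (ν : Measure Y) [ν.IsAddHaarMeasure]

theorem continuous_measureReal_crossSection (hi : ∀ p, φ i p = p.1)
    (hpar : ∀ j ≠ i, ∀ t : ℝ, φ j ≠ t • φ i)
    (hinj : Function.Injective (ContinuousLinearMap.pi φ)) :
    Continuous fun p : (ι → ℝ) × (ι → ℝ) × ℝ ↦ ν.real (crossSection φ i p.1 p.2.1 p.2.2) := by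
  classical
  simp only [crossSection_eq_slab]
  have hslab := continuous_measureReal_slab ν (fun j : {j // j ≠ i} ↦
    comp_inr_ne_zero hi (hpar j j.2)) (injective_pi_comp_inr hi hinj)
  exact hslab.comp (by fun_prop : Continuous fun p : (ι → ℝ) × (ι → ℝ) × ℝ ↦
    ((fun j : {j // j ≠ i} ↦ p.1 j - φ j (1, 0) * p.2.2),
      fun j : {j // j ≠ i} ↦ p.2.1 j - φ j (1, 0) * p.2.2))

theorem setIntegral_slab_fst (hi : ∀ p, φ i p = p.1)
    (hinj : Function.Injective (ContinuousLinearMap.pi φ)) {f : ℝ → ℝ} (hf : Continuous f)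
    {l h : ι → ℝ} (hlh : l i ≤ h i) :
    ∫ p in slab φ l h, f p.1 ∂(volume.prod ν) =
      ∫ r in l i..h i, f r * ν.real (crossSection φ i l h r) := by
  have hint : IntegrableOn (fun p : ℝ × Y ↦ f p.1) (slab φ l h) (volume.prod ν) :=
    (hf.comp continuous_fst).continuousOn.integrableOn_compact
      (Metric.isCompact_of_isClosed_isBounded (isClosed_slab _ _ _) (isBounded_slab hinj l h))
  rw [← integral_indicator (isClosed_slab φ l h).measurableSet,
    integral_prod _ (hint.integrable_indicator (isClosed_slab φ l h).measurableSet),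
    intervalIntegral.integral_of_le hlh, ← integral_Icc_eq_integral_Ioc,
    ← integral_indicator measurableSet_Icc]
  refine integral_congr_ae (Eventually.of_forall fun r ↦ ?_)
  by_cases hr : r ∈ Icc (l i) (h i)
  · have hpre : Prod.mk r ⁻¹' slab φ l h = crossSection φ i l h r := by
      ext y
      rw [mem_preimage, mem_slab_iff_mem_crossSection hi, and_iff_right hr]
    calc ∫ y, (slab φ l h).indicator (fun p ↦ f p.1) (r, y) ∂ν
        = ∫ y, (crossSection φ i l h r).indicator (fun _ ↦ f r) y ∂ν := by
          rw [← hpre]; rfl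
      _ = _ := by
          rw [integral_indicator_const _ (isClosed_crossSection φ i l h r).measurableSet,
            indicator_of_mem hr, smul_eq_mul, mul_comm]
  · simp [indicator, mem_slab_iff_mem_crossSection hi, hr]

end CrossSections

section RealAnalysis

open Set Filter Topology

theorem le_apply_zero_of_mul_le_sq_half {g : ℝ → ℝ} (hg : ∀ s, 0 ≤ g s) (hpos : 0 < g 0)
    (hmid : ∀ s, g 0 * g s ≤ g (s / 2) ^ 2) (hd : HasDerivAt g 0 0) (s : ℝ) : g s ≤ g 0 := by
  have hpow (k : ℕ) : g s / g 0 ≤ (g (s / 2 ^ k) / g 0) ^ 2 ^ k := by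
    induction k with
    | zero => simp
    | succ k ih =>
      have hhalf : g (s / 2 ^ k) / g 0 ≤ (g (s / 2 ^ (k + 1)) / g 0) ^ 2 := by
        rw [div_pow, div_le_div_iff₀ hpos (by positivity), pow_succ 2, ← div_div]
        nlinarith [hmid (s / 2 ^ k)]
      calc g s / g 0 ≤ (g (s / 2 ^ k) / g 0) ^ 2 ^ k := ih
        _ ≤ ((g (s / 2 ^ (k + 1)) / g 0) ^ 2) ^ 2 ^ k :=
          pow_le_pow_left₀ (div_nonneg (hg _) hpos.le) hhalf _
        _ = _ := by rw [← pow_mul, ← pow_succ']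
  let γ : ℕ → ℝ := fun n ↦ g (s / n) / g 0 - 1
  have hγ : Tendsto (fun n : ℕ ↦ n * γ n) atTop (𝓝 0) := by
    have hslope : HasDerivAt (fun x ↦ g (s * x) / g 0 - 1) 0 0 := by
      have hcomp : HasDerivAt (fun x ↦ g (s * x)) 0 0 := by
        have hd' : HasDerivAt g 0 (s * 0) := by rwa [mul_zero]
        simpa [Function.comp_def] using hd'.comp 0 (hasDerivAt_const_mul s)
      simpa using (hcomp.div_const (g 0)).sub_const 1
    have hseq := hslope.tendsto_slope_zero.comp <| (tendsto_inv_atTop_nhdsGT_zero.mono_right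
      (nhdsWithin_mono 0 fun _ hx ↦ ne_of_gt hx)).comp tendsto_natCast_atTop_atTop
    refine hseq.congr fun n ↦ ?_
    simp [γ, div_eq_mul_inv, hpos.ne']
  have hlim : Tendsto (fun k : ℕ ↦ (g (s / 2 ^ k) / g 0) ^ 2 ^ k) atTop (𝓝 1) := by
    have hexp := (Real.tendsto_one_add_pow_exp_of_tendsto hγ).comp
      (tendsto_pow_atTop_atTop_of_one_lt (one_lt_two (α := ℕ)))
    simpa [γ, Function.comp_def] using hexp
  exact (div_le_one hpos).1 (ge_of_tendsto' hlim hpow)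

theorem hasDerivAt_intervalIntegral_of_continuous_uncurry {B : ℝ → ℝ → ℝ}
    (hB : Continuous (Function.uncurry B)) (a c : ℝ) :
    HasDerivAt (fun s ↦ ∫ x in a..a + s * c, B s x) (c * B 0 a) 0 := by
  have hBs : Continuous fun p : ℝ × ℝ ↦ B p.1 (a + p.1 * p.2) :=
    hB.comp₂ continuous_fst (by fun_prop : Continuous fun p : ℝ × ℝ ↦ a + p.1 * p.2)
  have hQ : Continuous fun s ↦ ∫ x in (0 : ℝ)..c, B s (a + s * x) :=
    intervalIntegral.continuous_parametric_intervalIntegral_of_continuous' hBs 0 c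
  have hscale (s : ℝ) : ∫ x in a..a + s * c, B s x = s * ∫ x in (0 : ℝ)..c, B s (a + s * x) := by
    simp
  refine hasDerivAt_iff_tendsto_slope_zero.2 (((hQ.tendsto' 0 (c * B 0 a) (by simp)).mono_left
    nhdsWithin_le_nhds).congr' ?_)
  filter_upwards [self_mem_nhdsWithin] with s hs
  rw [zero_add, hscale, hscale, zero_mul, sub_zero, smul_eq_mul, inv_mul_cancel_left₀ hs]

theorem eq_of_hasDerivAt_of_eventually_mul_le_sq {F : ℝ → ℝ} {a b r ρ v : ℝ}
    (ha : HasDerivAt F a r) (hb : HasDerivAt F b ρ) (hv : F r + F ρ = v) (hr : F r ≠ 0)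
    (hle : ∀ᶠ x in 𝓝 0, F (r + x) * (v - F (ρ + x)) ≤ F r ^ 2) : a = b := by
  have hvr : v - F ρ = F r := by linarith
  have hmax : IsLocalMax (fun x ↦ F (r + x) * (v - F (ρ + x))) 0 := by
    filter_upwards [hle] with x hx
    simpa only [add_zero, hvr, sq] using hx
  have hderiv : HasDerivAt (fun x ↦ F (r + x) * (v - F (ρ + x)))
      (a * (v - F ρ) + F r * -b) 0 := by
    have har : HasDerivAt (fun x ↦ F (r + x)) a 0 :=
      HasDerivAt.comp_const_add r 0 (by simpa using ha)
    have hbρ : HasDerivAt (fun x ↦ F (ρ + x)) b 0 :=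
      HasDerivAt.comp_const_add ρ 0 (by simpa using hb)
    simpa only [add_zero] using! har.mul (hbρ.const_sub v)
  have hzero : F r * (a - b) = 0 := by linear_combination hmax.hasDerivAt_eq_zero hderiv - a * hvr
  exact sub_eq_zero.1 ((mul_eq_zero.1 hzero).resolve_left hr)

theorem exists_hasDerivAt_rightInverse {F f : ℝ → ℝ} {l h : ℝ} (hlh : l < h)
    (hF : ∀ r, HasDerivAt F (f r) r) (hf : ∀ r ∈ Ioo l h, 0 < f r) :
    ∃ q : ℝ → ℝ, BijOn F (Ioo l h) (Ioo (F l) (F h)) ∧ InvOn q F (Ioo l h) (Ioo (F l) (F h)) ∧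
      ∀ τ ∈ Ioo (F l) (F h), HasDerivAt q (f (q τ))⁻¹ τ := by
  have hFc : Continuous F := continuous_iff_continuousAt.2 fun r ↦ (hF r).continuousAt
  have hmono : StrictMonoOn F (Icc l h) := by
    refine strictMonoOn_of_deriv_pos (convex_Icc l h) hFc.continuousOn fun r hr ↦ ?_
    rw [(hF r).deriv]
    exact hf r (interior_Icc (a := l) ▸ hr)
  have hbij : BijOn F (Ioo l h) (Ioo (F l) (F h)) := by
    refine ⟨fun r hr ↦ ⟨?_, ?_⟩, hmono.injOn.mono Ioo_subset_Icc_self,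
      intermediate_value_Ioo hlh.le hFc.continuousOn⟩
    · exact hmono (left_mem_Icc.2 hlh.le) (Ioo_subset_Icc_self hr) hr.1
    · exact hmono (Ioo_subset_Icc_self hr) (right_mem_Icc.2 hlh.le) hr.2
  let q := Function.invFunOn F (Ioo l h)
  have hinv : InvOn q F (Ioo l h) (Ioo (F l) (F h)) := hbij.invOn_invFunOn
  have hqbij : BijOn q (Ioo (F l) (F h)) (Ioo l h) := hbij.symm hinv.symm
  have hqmono : StrictMonoOn q (Ioo (F l) (F h)) := fun a ha b hb hab ↦ by
    rw [← hmono.lt_iff_lt (Ioo_subset_Icc_self (hqbij.mapsTo ha))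
      (Ioo_subset_Icc_self (hqbij.mapsTo hb)), hinv.2 ha, hinv.2 hb]
    exact hab
  refine ⟨q, hbij, hinv, fun τ hτ ↦ ?_⟩
  have hcont : ContinuousAt q τ := hqmono.continuousAt_of_image_mem_nhds (isOpen_Ioo.mem_nhds hτ)
    (hqbij.image_eq ▸ isOpen_Ioo.mem_nhds (hqbij.mapsTo hτ))
  exact HasDerivAt.of_local_left_inverse hcont (hF _) (hf _ (hqbij.mapsTo hτ)).ne'
    (eventually_of_mem (isOpen_Ioo.mem_nhds hτ) fun _ h ↦ hinv.2 h)

theorem exists_forall_apply_sub_eq_of_quantile {F f : ℝ → ℝ} {l h : ℝ} (hlh : l < h)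
    (hF : ∀ r, HasDerivAt F (f r) r) (hl : F l = 0) (hf : ∀ r ∈ Ioo l h, 0 < f r)
    (H : ∀ r ∈ Ioo l h, ∀ ρ ∈ Ioo l h, F r + F ρ = F h → f r = f ρ) :
    ∃ C, ∀ r ∈ Ioo l h, C - r ∈ Ioo l h ∧ f (C - r) = f r := by
  obtain ⟨q, hbij, hinv, hq⟩ := exists_hasDerivAt_rightInverse hlh hF hf
  have hqmaps : MapsTo q (Ioo (F l) (F h)) (Ioo l h) := (hbij.symm hinv.symm).mapsTo
  rw [hl] at hbij hinv hq hqmaps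
  have hrefl {τ : ℝ} (hτ : τ ∈ Ioo 0 (F h)) : F h - τ ∈ Ioo 0 (F h) := by
    simpa [and_comm] using hτ
  have hfq {τ : ℝ} (hτ : τ ∈ Ioo 0 (F h)) : f (q τ) = f (q (F h - τ)) :=
    H _ (hqmaps hτ) _ (hqmaps (hrefl hτ)) (by rw [hinv.2 hτ, hinv.2 (hrefl hτ)]; ring)
  have hderiv : ∀ τ ∈ Ioo 0 (F h), HasDerivAt (fun τ ↦ q τ + q (F h - τ)) 0 τ := fun τ hτ ↦ by
    simpa [hfq hτ] using! (hq τ hτ).add ((hq _ (hrefl hτ)).comp_const_sub (F h) τ)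
  obtain ⟨C, hC⟩ := isOpen_Ioo.exists_is_const_of_deriv_eq_zero isPreconnected_Ioo
    (fun τ hτ ↦ (hderiv τ hτ).differentiableAt.differentiableWithinAt)
    (fun τ hτ ↦ (hderiv τ hτ).deriv)
  refine ⟨C, fun r hr ↦ ?_⟩
  have hFr := hbij.mapsTo hr
  have hCr : C - r = q (F h - F r) := by rw [← hC _ hFr, hinv.1 hr, add_sub_cancel_left]
  rw [hCr]
  exact ⟨hqmaps (hrefl hFr), by rw [← hfq hFr, hinv.1 hr]⟩

theorem eq_add_of_forall_sub_mem_Ioo {l h C : ℝ} (hlh : l < h)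
    (hC : ∀ r ∈ Ioo l h, C - r ∈ Ioo l h) : C = l + h := by
  have hmaps : MapsTo (C - ·) (Icc l h) (Icc l h) := by
    simpa only [closure_Ioo hlh.ne] using MapsTo.closure hC (continuous_const.sub continuous_id)
  linarith [(hmaps (left_mem_Icc.2 hlh.le)).2, (hmaps (right_mem_Icc.2 hlh.le)).1]

theorem integral_mul_eq_midpoint_mul_integral_of_quantile {f : ℝ → ℝ}
    (hfc : Continuous f) {l h : ℝ} (hlh : l ≤ h) (hf : ∀ r ∈ Ioo l h, 0 < f r)
    (H : ∀ r ∈ Ioo l h, ∀ ρ ∈ Ioo l h,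
      (∫ x in l..r, f x) + (∫ x in l..ρ, f x) = ∫ x in l..h, f x → f r = f ρ) :
    ∫ r in l..h, r * f r = (l + h) / 2 * ∫ r in l..h, f r := by
  rcases hlh.eq_or_lt with rfl | hlh
  · simp
  obtain ⟨C, hC⟩ := exists_forall_apply_sub_eq_of_quantile hlh
    (fun r ↦ hfc.integral_hasStrictDerivAt l r |>.hasDerivAt) intervalIntegral.integral_same hf H
  obtain rfl := eq_add_of_forall_sub_mem_Ioo hlh fun r hr ↦ (hC r hr).1
  have hsymm : ∫ r in l..h, (l + h - r) * f r = ∫ r in l..h, r * f r := by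
    have hsub := intervalIntegral.integral_comp_sub_left (a := l) (b := h) (fun r ↦ r * f r) (l + h)
    rw [add_sub_cancel_right, add_sub_cancel_left] at hsub
    rw [← hsub]
    exact intervalIntegral.integral_congr_Ioo_of_le hlh.le fun r hr ↦ by
      simp only [(hC r hr).2]
  have hexpand : ∫ r in l..h, (l + h - r) * f r =
      (l + h) * (∫ r in l..h, f r) - ∫ r in l..h, r * f r := by
    have hmul : Continuous fun r ↦ r * f r := by fun_prop
    simp only [sub_mul]
    rw [intervalIntegral.integral_sub ((hfc.const_mul _).intervalIntegrable _ _)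
      (hmul.intervalIntegrable _ _), intervalIntegral.integral_const_mul]
  linear_combination (hexpand - hsymm) / 2

end RealAnalysis

section SectionVolumes

open Set Filter Topology

variable {E Y ι : Type*} [NormedAddCommGroup E] [NormedSpace ℝ E]
  [NormedAddCommGroup Y] [NormedSpace ℝ Y]

theorem injective_pi_comp_symm {φ : ι → StrongDual ℝ E} (e : E ≃L[ℝ] ℝ × Y)
    (hinj : Function.Injective (ContinuousLinearMap.pi φ)) :
    Function.Injective (ContinuousLinearMap.pi fun j ↦ φ j ∘L (e.symm : ℝ × Y →L[ℝ] E)) :=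
  hinj.comp e.symm.injective

variable [MeasurableSpace Y]

/-- A linear chart of `E` in which the functional `f` becomes the first coordinate and the measure
`μ` becomes the product of Lebesgue measure and `ν`. -/
structure IsSlicingChart [MeasurableSpace E] (f : StrongDual ℝ E) (e : E ≃L[ℝ] ℝ × Y)
    (μ : Measure E) (ν : Measure Y) : Prop where
  fst_apply (x : E) : (e x).1 = f x
  measurePreserving : MeasurePreserving e μ (volume.prod ν)

/-- The volume of the cross-section `φ i = r` of the slabs `l j ≤ φ j ≤ h j`, `j ≠ i`, measured by
`ν` in a chart `e` whose first coordinate is meant to be `φ i`. At `r = h i` and `r = l i` this is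
the volume of the two opposite facets in the direction `φ i`. -/
noncomputable def sectionVolume (ν : Measure Y) (φ : ι → StrongDual ℝ E) (e : E ≃L[ℝ] ℝ × Y)
    (i : ι) (l h : ι → ℝ) (r : ℝ) : ℝ :=
  ν.real (crossSection (fun j ↦ φ j ∘L (e.symm : ℝ × Y →L[ℝ] E)) i l h r)

theorem sectionVolume_update [DecidableEq ι] (ν : Measure Y) (φ : ι → StrongDual ℝ E)
    (e : E ≃L[ℝ] ℝ × Y) (i : ι) (l h : ι → ℝ) (a b r : ℝ) :
    sectionVolume ν φ e i (Function.update l i a) (Function.update h i b) r =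
      sectionVolume ν φ e i l h r := by
  rw [sectionVolume, crossSection_update, sectionVolume]

theorem sectionVolume_update_left [DecidableEq ι] (ν : Measure Y) (φ : ι → StrongDual ℝ E)
    (e : E ≃L[ℝ] ℝ × Y) (i : ι) (l h : ι → ℝ) (a r : ℝ) :
    sectionVolume ν φ e i (Function.update l i a) h r = sectionVolume ν φ e i l h r := by
  simpa using sectionVolume_update ν φ e i l h a (h i) r

theorem sectionVolume_update_right [DecidableEq ι] (ν : Measure Y) (φ : ι → StrongDual ℝ E)
    (e : E ≃L[ℝ] ℝ × Y) (i : ι) (l h : ι → ℝ) (b r : ℝ) :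
    sectionVolume ν φ e i l (Function.update h i b) r = sectionVolume ν φ e i l h r := by
  simpa using sectionVolume_update ν φ e i l h (l i) b r

variable [MeasurableSpace E] {f : StrongDual ℝ E} {φ : ι → StrongDual ℝ E} {i : ι}
  {e : E ≃L[ℝ] ℝ × Y} {μ : Measure E} {ν : Measure Y}

theorem IsSlicingChart.apply_symm (he : IsSlicingChart f e μ ν) (p : ℝ × Y) :
    f (e.symm p) = p.1 := by
  rw [← he.fst_apply, e.apply_symm_apply]

variable [Finite ι] [FiniteDimensional ℝ Y] [BorelSpace Y] [ν.IsAddHaarMeasure]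

theorem IsSlicingChart.continuous_sectionVolume (he : IsSlicingChart (φ i) e μ ν)
    (hpar : ∀ j ≠ i, ∀ t : ℝ, φ j ≠ t • φ i)
    (hinj : Function.Injective (ContinuousLinearMap.pi φ)) :
    Continuous fun p : (ι → ℝ) × (ι → ℝ) × ℝ ↦ sectionVolume ν φ e i p.1 p.2.1 p.2.2 :=
  continuous_measureReal_crossSection ν he.apply_symm
    (fun j hj t ht ↦ hpar j hj t <| ContinuousLinearMap.ext fun x ↦ by
      simpa using DFunLike.congr_fun ht (e x))
    (injective_pi_comp_symm e hinj)

variable [BorelSpace E]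

theorem IsSlicingChart.setIntegral_slab (he : IsSlicingChart (φ i) e μ ν)
    (hinj : Function.Injective (ContinuousLinearMap.pi φ)) {g : ℝ → ℝ} (hg : Continuous g)
    {l h : ι → ℝ} (hlh : l i ≤ h i) :
    ∫ x in slab φ l h, g (φ i x) ∂μ = ∫ r in l i..h i, g r * sectionVolume ν φ e i l h r := by
  have hpre : slab φ l h = e ⁻¹' slab (fun j ↦ φ j ∘L (e.symm : ℝ × Y →L[ℝ] E)) l h := by
    ext x
    simp [slab]
  rw [hpre, ← setIntegral_congr_fun (he.measurePreserving.measurable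
      (isClosed_slab _ l h).measurableSet) (fun x _ ↦ congrArg g (he.fst_apply x)),
    he.measurePreserving.setIntegral_preimage_emb
      e.toHomeomorph.measurableEmbedding (fun p ↦ g p.1),
    setIntegral_slab_fst ν he.apply_symm (injective_pi_comp_symm e hinj) hg hlh]
  rfl

theorem IsSlicingChart.measureReal_slab (he : IsSlicingChart (φ i) e μ ν)
    (hinj : Function.Injective (ContinuousLinearMap.pi φ)) {l h : ι → ℝ} (hlh : l i ≤ h i) :
    μ.real (slab φ l h) = ∫ r in l i..h i, sectionVolume ν φ e i l h r := by
  simpa using he.setIntegral_slab hinj (continuous_const (y := (1 : ℝ))) hlh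

theorem IsSlicingChart.measureReal_slab_update_right [DecidableEq ι]
    (he : IsSlicingChart (φ i) e μ ν) (hinj : Function.Injective (ContinuousLinearMap.pi φ))
    {l h : ι → ℝ} {r : ℝ} (hr : l i ≤ r) :
    μ.real (slab φ l (Function.update h i r)) = ∫ x in l i..r, sectionVolume ν φ e i l h x := by
  rw [he.measureReal_slab hinj (by simpa using hr)]
  simp only [sectionVolume_update_right, Function.update_self]

theorem IsSlicingChart.measureReal_slab_update_left [DecidableEq ι]
    (he : IsSlicingChart (φ i) e μ ν) (hinj : Function.Injective (ContinuousLinearMap.pi φ))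
    {l h : ι → ℝ} {r : ℝ} (hr : r ≤ h i) :
    μ.real (slab φ (Function.update l i r) h) = ∫ x in r..h i, sectionVolume ν φ e i l h x := by
  rw [he.measureReal_slab hinj (by simpa using hr)]
  simp only [sectionVolume_update_left, Function.update_self]

theorem IsSlicingChart.hasDerivAt_measureReal_slab [DecidableEq ι]
    (he : IsSlicingChart (φ i) e μ ν) (hpar : ∀ j ≠ i, ∀ t : ℝ, φ j ≠ t • φ i)
    (hinj : Function.Injective (ContinuousLinearMap.pi φ)) {l h c : ι → ℝ} (hlh : l i ≤ h i)
    (hci : c i = 0) {V' : ℝ}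
    (hV : HasDerivAt (fun s : ℝ ↦ μ.real (slab φ (l + s • c) (h + s • c))) V' 0) (a : ℝ) :
    HasDerivAt (fun s : ℝ ↦ μ.real (slab φ (l + s • Function.update c i a)
        (h + s • Function.update c i a)))
      (V' + a * (sectionVolume ν φ e i l h (h i) - sectionVolume ν φ e i l h (l i))) 0 := by
  let B (s r : ℝ) : ℝ := sectionVolume ν φ e i (l + s • c) (h + s • c) r
  have hB : Continuous (Function.uncurry B) := (he.continuous_sectionVolume hpar hinj).comp
    (by fun_prop : Continuous fun p : ℝ × ℝ ↦ (l + p.1 • c, h + p.1 • c, p.2))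
  have hint (s x y : ℝ) : IntervalIntegrable (B s) volume x y :=
    (hB.comp (Continuous.prodMk_right s)).intervalIntegrable x y
  have hupdate (k : ι → ℝ) (s : ℝ) :
      k + s • Function.update c i a = Function.update (k + s • c) i (k i + s * a) := by
    ext j
    rcases eq_or_ne j i with rfl | hj <;> simp [*]
  have hVB (s : ℝ) : μ.real (slab φ (l + s • c) (h + s • c)) = ∫ r in l i..h i, B s r := by
    simpa [hci] using he.measureReal_slab hinj (l := l + s • c) (h := h + s • c) (by simpa [hci])
  have hsplit (s : ℝ) :
      μ.real (slab φ (l + s • Function.update c i a) (h + s • Function.update c i a)) =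
        μ.real (slab φ (l + s • c) (h + s • c)) +
          ((∫ r in h i..h i + s * a, B s r) - ∫ r in l i..l i + s * a, B s r) := by
    rw [hupdate, hupdate, he.measureReal_slab hinj (by simpa using hlh), hVB]
    simp only [sectionVolume_update, Function.update_self]
    rw [intervalIntegral.integral_interval_sub_interval_comm' (hint s _ _) (hint s _ _)
      (hint s _ _), add_sub_cancel]
  simp only [hsplit]
  convert! hV.add ((hasDerivAt_intervalIntegral_of_continuous_uncurry hB (h i) a).sub
    (hasDerivAt_intervalIntegral_of_continuous_uncurry hB (l i) a)) using 1
  simp [B, mul_sub]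

end SectionVolumes

section OppositeFacets

open Set Filter Topology

variable {E Y ι : Type*} [NormedAddCommGroup E] [NormedSpace ℝ E] [MeasurableSpace E] [BorelSpace E]
  {μ : Measure E}

theorem measureReal_slab_neg [μ.IsNegInvariant] (φ : ι → StrongDual ℝ E) (l h : ι → ℝ) :
    μ.real (slab φ (-h) (-l)) = μ.real (slab φ l h) := by
  have hneg : slab φ (-h) (-l) = Neg.neg ⁻¹' slab φ l h := by
    ext x
    simp [slab, neg_le, le_neg, and_comm]
  rw [hneg, measureReal_def, Measure.measure_preimage_neg, measureReal_def]

variable {φ : ι → StrongDual ℝ E} {l h : ι → ℝ}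
  [NormedAddCommGroup Y] [NormedSpace ℝ Y] [MeasurableSpace Y] [BorelSpace Y]
  [FiniteDimensional ℝ Y] {ν : Measure Y} [ν.IsAddHaarMeasure] {e : ι → E ≃L[ℝ] ℝ × Y}

theorem hasDerivAt_measureReal_slab_add_smul [Fintype ι]
    (he : ∀ i, IsSlicingChart (φ i) (e i) μ ν)
    (hpar : Pairwise fun i j ↦ ∀ t : ℝ, φ i ≠ t • φ j)
    (hinj : Function.Injective (ContinuousLinearMap.pi φ)) (hlh : ∀ i, l i ≤ h i) (c : ι → ℝ) :
    HasDerivAt (fun s : ℝ ↦ μ.real (slab φ (l + s • c) (h + s • c)))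
      (∑ i, c i *
        (sectionVolume ν φ (e i) i l h (h i) - sectionVolume ν φ (e i) i l h (l i))) 0 := by
  classical
  suffices hJ : ∀ J : Finset ι, HasDerivAt
      (fun s : ℝ ↦ μ.real (slab φ (l + s • J.piecewise c 0) (h + s • J.piecewise c 0)))
      (∑ i ∈ J, c i * (sectionVolume ν φ (e i) i l h (h i) - sectionVolume ν φ (e i) i l h (l i)))
      0 by
    simpa using hJ Finset.univ
  intro J
  induction J using Finset.induction_on with
  | empty => simpa using hasDerivAt_const (0 : ℝ) (μ.real (slab φ l h))
  | insert i J hi ih =>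
    rw [Finset.sum_insert hi, add_comm, Finset.piecewise_insert]
    exact (he i).hasDerivAt_measureReal_slab (fun j hj ↦ hpar hj) hinj (hlh i)
      (Finset.piecewise_eq_of_notMem _ _ _ hi) ih (c i)

variable [Finite ι]

theorem MidpointPrekopaLeindler.measureReal_slab_mul_le_sq [FiniteDimensional ℝ E]
    [IsLocallyFiniteMeasure μ] (hμ : MidpointPrekopaLeindler μ)
    (hinj : Function.Injective (ContinuousLinearMap.pi φ)) (l h l' h' : ι → ℝ) :
    μ.real (slab φ l h) * μ.real (slab φ l' h') ≤
      μ.real (slab φ (midpoint ℝ l l') (midpoint ℝ h h')) ^ 2 := by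
  have hmid := hμ.measure_mul_le_sq (isClosed_slab φ l h).measurableSet
    (isClosed_slab φ l' h').measurableSet
    (isClosed_slab φ (midpoint ℝ l l') (midpoint ℝ h h')).measurableSet fun a ha b hb j ↦ by
      simp only [midpoint_eq_smul_add, map_smul, map_add, invOf_eq_inv, Pi.smul_apply, Pi.add_apply]
      exact ⟨by gcongr; exacts [(ha j).1, (hb j).1], by gcongr; exacts [(ha j).2, (hb j).2]⟩
  simp only [measureReal_def, ← ENNReal.toReal_mul, ← ENNReal.toReal_pow]
  exact ENNReal.toReal_mono (ENNReal.pow_ne_top (isBounded_slab hinj _ _).measure_lt_top.ne) hmid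

theorem MidpointPrekopaLeindler.measureReal_slab_add_le [FiniteDimensional ℝ E]
    [IsLocallyFiniteMeasure μ] (hμ : MidpointPrekopaLeindler μ)
    (he : ∀ i, IsSlicingChart (φ i) (e i) μ ν)
    (hpar : Pairwise fun i j ↦ ∀ t : ℝ, φ i ≠ t • φ j)
    (hinj : Function.Injective (ContinuousLinearMap.pi φ)) (hlh : ∀ i, l i ≤ h i)
    (hpos : 0 < μ.real (slab φ l h))
    (hfacet : ∀ i, sectionVolume ν φ (e i) i l h (h i) = sectionVolume ν φ (e i) i l h (l i))
    (c : ι → ℝ) : μ.real (slab φ (l + c) (h + c)) ≤ μ.real (slab φ l h) := by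
  let g (s : ℝ) : ℝ := μ.real (slab φ (l + s • c) (h + s • c))
  have hg0 : g 0 = μ.real (slab φ l h) := by simp [g]
  cases nonempty_fintype ι
  have hderiv : HasDerivAt g 0 0 := by
    simpa [hfacet] using hasDerivAt_measureReal_slab_add_smul he hpar hinj hlh c
  have hmid (s : ℝ) : g 0 * g s ≤ g (s / 2) ^ 2 := by
    have hshift (k : ι → ℝ) : midpoint ℝ k (k + s • c) = k + (s / 2) • c := by
      ext j
      simp only [midpoint_eq_smul_add, invOf_eq_inv, Pi.add_apply, Pi.smul_apply, smul_eq_mul]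
      ring
    simpa [hg0, hshift] using hμ.measureReal_slab_mul_le_sq hinj l h (l + s • c) (h + s • c)
  simpa [g] using le_apply_zero_of_mul_le_sq_half (g := g) (fun _ ↦ measureReal_nonneg)
    (by rwa [hg0]) hmid hderiv 1

theorem measureReal_slab_update_right_add_update_left [DecidableEq ι] {i : ι} {e : E ≃L[ℝ] ℝ × Y}
    (he : IsSlicingChart (φ i) e μ ν) (hpar : ∀ j ≠ i, ∀ t : ℝ, φ j ≠ t • φ i)
    (hinj : Function.Injective (ContinuousLinearMap.pi φ)) {r : ℝ} (hr : r ∈ Icc (l i) (h i)) :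
    μ.real (slab φ l (Function.update h i r)) + μ.real (slab φ (Function.update l i r) h) =
      μ.real (slab φ l h) := by
  have hcont : Continuous (sectionVolume ν φ e i l h) :=
    (he.continuous_sectionVolume hpar hinj).comp
    (by fun_prop : Continuous fun r : ℝ ↦ (l, h, r))
  rw [he.measureReal_slab_update_right hinj hr.1, he.measureReal_slab_update_left hinj hr.2,
    he.measureReal_slab hinj (hr.1.trans hr.2)]
  exact intervalIntegral.integral_add_adjacent_intervals (hcont.intervalIntegrable _ _)
    (hcont.intervalIntegrable _ _)

theorem measureReal_slab_update_mul_le_sq [FiniteDimensional ℝ E] [IsLocallyFiniteMeasure μ]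
    [μ.IsNegInvariant] [DecidableEq ι] (hμ : MidpointPrekopaLeindler μ)
    (hinj : Function.Injective (ContinuousLinearMap.pi φ)) (l h : ι → ℝ) (i : ι) (r ρ : ℝ) :
    μ.real (slab φ l (Function.update h i r)) * μ.real (slab φ (Function.update l i ρ) h) ≤
        μ.real (slab φ (midpoint ℝ l (-h))
          (Function.update (midpoint ℝ h (-l)) i (midpoint ℝ r (-ρ)))) ^ 2 ∧
      μ.real (slab φ (Function.update l i r) h) * μ.real (slab φ l (Function.update h i ρ)) ≤
        μ.real (slab φ (Function.update (midpoint ℝ l (-h)) i (midpoint ℝ r (-ρ)))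
          (midpoint ℝ h (-l))) ^ 2 := by
  have hmid (k k' : ι → ℝ) :
      Function.update (midpoint ℝ k (-k')) i (midpoint ℝ r (-ρ)) =
        midpoint ℝ (Function.update k i r) (-Function.update k' i ρ) := by
    ext j
    rcases eq_or_ne j i with rfl | hj <;>
      simp [midpoint_eq_smul_add, mul_add, *]
  rw [hmid, hmid, ← measureReal_slab_neg φ (Function.update l i ρ),
    ← measureReal_slab_neg φ l (Function.update h i ρ)]
  exact ⟨hμ.measureReal_slab_mul_le_sq hinj _ _ _ _, hμ.measureReal_slab_mul_le_sq hinj _ _ _ _⟩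

-- If opposite facets have equal volumes, centring the slabs turns `(K - K) / 2` into a body of the
-- same volume as `K`. Cutting `K` at the heights `r` and `ρ` then gives equality in both halves.
theorem MidpointPrekopaLeindler.measureReal_slab_midpoint_update_eq [FiniteDimensional ℝ E]
    [IsLocallyFiniteMeasure μ] [μ.IsNegInvariant] [DecidableEq ι] (hμ : MidpointPrekopaLeindler μ)
    (he : ∀ i, IsSlicingChart (φ i) (e i) μ ν)
    (hpar : Pairwise fun i j ↦ ∀ t : ℝ, φ i ≠ t • φ j)
    (hinj : Function.Injective (ContinuousLinearMap.pi φ)) (hlh : ∀ i, l i ≤ h i)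
    (hpos : 0 < μ.real (slab φ l h))
    (hfacet : ∀ i, sectionVolume ν φ (e i) i l h (h i) = sectionVolume ν φ (e i) i l h (l i))
    {i : ι} {r ρ : ℝ} (hr : r ∈ Icc (l i) (h i)) (hρ : ρ ∈ Icc (l i) (h i))
    (hsum : μ.real (slab φ l (Function.update h i r)) + μ.real (slab φ l (Function.update h i ρ)) =
      μ.real (slab φ l h)) :
    μ.real (slab φ (midpoint ℝ l (-h))
      (Function.update (midpoint ℝ h (-l)) i (midpoint ℝ r (-ρ)))) =
      μ.real (slab φ l (Function.update h i r)) := by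
  have hcentre : μ.real (slab φ (midpoint ℝ l (-h)) (midpoint ℝ h (-l))) ≤ μ.real (slab φ l h) := by
    convert hμ.measureReal_slab_add_le he hpar hinj hlh hpos hfacet (-midpoint ℝ l h) using 3 <;>
      ext j <;> simp only [midpoint_eq_smul_add, invOf_eq_inv, Pi.add_apply, Pi.smul_apply,
        Pi.neg_apply, smul_eq_mul] <;> ring
  have hcut := measureReal_slab_update_right_add_update_left (he i) (fun j hj ↦ hpar hj) hinj
    (l := midpoint ℝ l (-h)) (h := midpoint ℝ h (-l)) (r := midpoint ℝ r (-ρ)) (by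
      simp only [midpoint_eq_smul_add, invOf_eq_inv, Pi.smul_apply, Pi.add_apply, Pi.neg_apply,
        smul_eq_mul]
      constructor <;> linarith [hr.1, hr.2, hρ.1, hρ.2])
  have hcut_r := measureReal_slab_update_right_add_update_left (he i) (fun j hj ↦ hpar hj) hinj hr
  have hcut_ρ := measureReal_slab_update_right_add_update_left (he i) (fun j hj ↦ hpar hj) hinj hρ
  obtain ⟨hlow, hupp⟩ := measureReal_slab_update_mul_le_sq hμ hinj l h i r ρ
  rw [show μ.real (slab φ (Function.update l i ρ) h) = μ.real (slab φ l (Function.update h i r)) by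
    linarith, ← sq] at hlow
  rw [show μ.real (slab φ (Function.update l i r) h) = μ.real (slab φ l (Function.update h i ρ)) by
    linarith, ← sq] at hupp
  have hlow' := le_of_sq_le_sq hlow measureReal_nonneg
  have hupp' := le_of_sq_le_sq hupp measureReal_nonneg
  linarith

theorem MidpointPrekopaLeindler.sectionVolume_eq_of_integral_add_eq [FiniteDimensional ℝ E]
    [IsLocallyFiniteMeasure μ] [μ.IsNegInvariant] (hμ : MidpointPrekopaLeindler μ)
    (he : ∀ i, IsSlicingChart (φ i) (e i) μ ν)
    (hpar : Pairwise fun i j ↦ ∀ t : ℝ, φ i ≠ t • φ j)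
    (hinj : Function.Injective (ContinuousLinearMap.pi φ)) (hlh : ∀ i, l i ≤ h i)
    (hfacet : ∀ i, sectionVolume ν φ (e i) i l h (h i) = sectionVolume ν φ (e i) i l h (l i))
    {i : ι} (hpos : ∀ r ∈ Ioo (l i) (h i), 0 < sectionVolume ν φ (e i) i l h r) {r ρ : ℝ}
    (hr : r ∈ Ioo (l i) (h i)) (hρ : ρ ∈ Ioo (l i) (h i))
    (hsum : (∫ x in l i..r, sectionVolume ν φ (e i) i l h x) +
      (∫ x in l i..ρ, sectionVolume ν φ (e i) i l h x) =
        ∫ x in l i..h i, sectionVolume ν φ (e i) i l h x) :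
    sectionVolume ν φ (e i) i l h r = sectionVolume ν φ (e i) i l h ρ := by
  classical
  have hcont : Continuous (sectionVolume ν φ (e i) i l h) :=
    ((he i).continuous_sectionVolume (fun j hj ↦ hpar hj) hinj).comp
      (by fun_prop : Continuous fun r : ℝ ↦ (l, h, r))
  have hlow {x : ℝ} (hx : x ∈ Icc (l i) (h i)) :=
    (he i).measureReal_slab_update_right hinj (h := h) hx.1
  have hupp {x : ℝ} (hx : x ∈ Icc (l i) (h i)) : μ.real (slab φ (Function.update l i x) h) =
      μ.real (slab φ l h) - ∫ y in l i..x, sectionVolume ν φ (e i) i l h y := by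
    rw [← measureReal_slab_update_right_add_update_left (he i) (fun j hj ↦ hpar hj) hinj hx,
      hlow hx, add_sub_cancel_left]
  have hvol := (he i).measureReal_slab hinj (hlh i)
  have hint_pos {x : ℝ} (hx : x ∈ Ioo (l i) (h i)) :
      0 < ∫ y in l i..x, sectionVolume ν φ (e i) i l h y :=
    intervalIntegral.intervalIntegral_pos_of_pos_on (hcont.intervalIntegrable _ _)
      (fun y hy ↦ hpos y ⟨hy.1, hy.2.trans hx.2⟩) hx.1
  have hIcc_r := Ioo_subset_Icc_self hr
  have hIcc_ρ := Ioo_subset_Icc_self hρ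
  have heq := hμ.measureReal_slab_midpoint_update_eq he hpar hinj hlh
    (by linarith [hint_pos hr, hint_pos hρ]) hfacet hIcc_r hIcc_ρ
    (by rw [hlow hIcc_r, hlow hIcc_ρ, hvol, hsum])
  refine eq_of_hasDerivAt_of_eventually_mul_le_sq (hcont.integral_hasStrictDerivAt _ r).hasDerivAt
    (hcont.integral_hasStrictDerivAt _ ρ).hasDerivAt hsum (hint_pos hr).ne' ?_
  have hmem {x : ℝ} (hx : x ∈ Ioo (l i) (h i)) : ∀ᶠ y in 𝓝 0, x + y ∈ Icc (l i) (h i) :=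
    ((continuous_const_add x).tendsto' 0 x (add_zero x)).eventually (Icc_mem_nhds hx.1 hx.2)
  filter_upwards [hmem hr, hmem hρ] with x hrx hρx
  have hprod := (measureReal_slab_update_mul_le_sq hμ hinj l h i (r + x) (ρ + x)).1
  have hmid : midpoint ℝ (r + x) (-(ρ + x)) = midpoint ℝ r (-ρ) := by
    simp [midpoint_eq_smul_add]
  rwa [hmid, heq, hlow hIcc_r, hlow hrx, hupp hρx, hvol] at hprod

end OppositeFacets

section Barycentre

open Set Filter Topology

variable {E Y ι : Type*} [NormedAddCommGroup E] [NormedSpace ℝ E]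

theorem Ioo_subset_image_interior {s : Set E} (hs : Convex ℝ s) (hne : (interior s).Nonempty)
    (f : StrongDual ℝ E) {a b : ℝ} (ha : a ∈ f '' s) (hb : b ∈ f '' s) :
    Ioo a b ⊆ f '' interior s := by
  have hclosure : f '' s ⊆ closure (f '' interior s) := by
    refine .trans (image_mono ?_) (image_closure_subset_closure_image f.continuous)
    exact hs.closure_interior_eq_closure_of_nonempty_interior hne ▸ subset_closure
  intro r hr
  obtain ⟨x, hxr, hx⟩ := mem_closure_iff.1 (hclosure ha) (Iio r) isOpen_Iio hr.1
  obtain ⟨y, hry, hy⟩ := mem_closure_iff.1 (hclosure hb) (Ioi r) isOpen_Ioi hr.2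
  have hord : OrdConnected (f '' interior s) :=
    (hs.interior.linear_image f.toLinearMap).ordConnected
  exact hord.out hx hy ⟨le_of_lt hxr, le_of_lt hry⟩

theorem convex_slab (φ : ι → StrongDual ℝ E) (l h : ι → ℝ) : Convex ℝ (slab φ l h) := by
  simp only [slab, ofPred_forall]
  exact convex_iInter fun j ↦ (convex_Icc _ _).linear_preimage (φ j).toLinearMap

theorem image_sub_left_slab_eq_image_sub_right {φ : ι → StrongDual ℝ E} {l h : ι → ℝ} {b : E}
    (hb : ∀ j, φ j b = (l j + h j) / 2) :
    (fun y ↦ b - y) '' slab φ l h = (fun y ↦ y - b) '' slab φ l h := by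
  have hreflect {y : E} (hy : y ∈ slab φ l h) : 2 • b - y ∈ slab φ l h := fun j ↦ by
    have hj := hy j
    simp only [map_sub, map_nsmul, hb, nsmul_eq_mul, Nat.cast_ofNat, mem_Icc] at hj ⊢
    constructor <;> linarith
  ext z
  constructor <;> rintro ⟨y, hy, rfl⟩ <;> exact ⟨2 • b - y, hreflect hy, by module⟩

variable [NormedAddCommGroup Y] [NormedSpace ℝ Y] [MeasurableSpace E] [MeasurableSpace Y]
  [FiniteDimensional ℝ Y] [Finite ι] {μ : Measure E} {ν : Measure Y} [ν.IsAddHaarMeasure]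
  {φ : ι → StrongDual ℝ E}
  {e : ι → E ≃L[ℝ] ℝ × Y} {l h : ι → ℝ}

theorem IsSlicingChart.sectionVolume_pos {e : E ≃L[ℝ] ℝ × Y} {i : ι}
    (he : IsSlicingChart (φ i) e μ ν)
    (hinj : Function.Injective (ContinuousLinearMap.pi φ))
    (hne : (interior (slab φ l h)).Nonempty) (hl : l i ∈ φ i '' slab φ l h)
    (hh : h i ∈ φ i '' slab φ l h) {r : ℝ} (hr : r ∈ Ioo (l i) (h i)) :
    0 < sectionVolume ν φ e i l h r := by
  classical
  obtain ⟨x, hx, hxr⟩ := Ioo_subset_image_interior (convex_slab φ l h) hne (φ i) hl hh hr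
  let U : Set Y := {y | e.symm (r, y) ∈ interior (slab φ l h)}
  have hU : IsOpen U := isOpen_interior.preimage (by fun_prop)
  have hUne : U.Nonempty := ⟨(e x).2, by
    have hex : (r, (e x).2) = e x := Prod.ext (by rw [he.fst_apply, hxr]) rfl
    simpa [U, hex]⟩
  have hsub : U ⊆ crossSection (fun j ↦ φ j ∘L (e.symm : ℝ × Y →L[ℝ] E)) i l h r :=
    fun y hy j _ ↦ interior_subset hy j
  refine ENNReal.toReal_pos ((hU.measure_pos ν hUne).trans_le (measure_mono hsub)).ne' ?_
  rw [crossSection_eq_slab]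
  exact (isBounded_slab (injective_pi_comp_inr he.apply_symm (injective_pi_comp_symm e hinj))
    _ _).measure_lt_top.ne

variable [FiniteDimensional ℝ E] [BorelSpace E] [BorelSpace Y]

theorem MidpointPrekopaLeindler.setIntegral_slab_apply [IsLocallyFiniteMeasure μ]
    [μ.IsNegInvariant] (hμ : MidpointPrekopaLeindler μ)
    (he : ∀ i, IsSlicingChart (φ i) (e i) μ ν)
    (hpar : Pairwise fun i j ↦ ∀ t : ℝ, φ i ≠ t • φ j)
    (hinj : Function.Injective (ContinuousLinearMap.pi φ))
    (hne : (interior (slab φ l h)).Nonempty) (hl : ∀ i, l i ∈ φ i '' slab φ l h)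
    (hh : ∀ i, h i ∈ φ i '' slab φ l h)
    (hfacet : ∀ i, sectionVolume ν φ (e i) i l h (h i) = sectionVolume ν φ (e i) i l h (l i))
    (i : ι) : ∫ x in slab φ l h, φ i x ∂μ = (l i + h i) / 2 * μ.real (slab φ l h) := by
  have hlh (i : ι) : l i ≤ h i := by
    obtain ⟨x, hx⟩ := hne
    exact (interior_subset hx i).1.trans (interior_subset hx i).2
  have hpos : ∀ r ∈ Ioo (l i) (h i), 0 < sectionVolume ν φ (e i) i l h r := fun r hr ↦
    (he i).sectionVolume_pos hinj hne (hl i) (hh i) hr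
  have hcont : Continuous (sectionVolume ν φ (e i) i l h) :=
    ((he i).continuous_sectionVolume (fun j hj ↦ hpar hj) hinj).comp
      (by fun_prop : Continuous fun r : ℝ ↦ (l, h, r))
  rw [(he i).setIntegral_slab hinj continuous_id' (hlh i), (he i).measureReal_slab hinj (hlh i)]
  exact integral_mul_eq_midpoint_mul_integral_of_quantile hcont (hlh i) hpos fun r hr ρ hρ hsum ↦
    hμ.sectionVolume_eq_of_integral_add_eq he hpar hinj hlh hfacet hpos hr hρ hsum

theorem MidpointPrekopaLeindler.exists_sectionVolume_ne [μ.IsAddHaarMeasure]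
    (hμ : MidpointPrekopaLeindler μ) (he : ∀ i, IsSlicingChart (φ i) (e i) μ ν)
    (hpar : Pairwise fun i j ↦ ∀ t : ℝ, φ i ≠ t • φ j)
    (hinj : Function.Injective (ContinuousLinearMap.pi φ))
    (hne : (interior (slab φ l h)).Nonempty) (hl : ∀ i, l i ∈ φ i '' slab φ l h)
    (hh : ∀ i, h i ∈ φ i '' slab φ l h)
    (hsymm : ¬∃ c : E, (fun y ↦ c - y) '' slab φ l h = (fun y ↦ y - c) '' slab φ l h) :
    ∃ i, sectionVolume ν φ (e i) i l h (h i) ≠ sectionVolume ν φ (e i) i l h (l i) := by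
  by_contra! hfacet
  have hbdd := isBounded_slab hinj l h
  have hid : IntegrableOn (fun x : E ↦ x) (slab φ l h) μ :=
    continuousOn_id.integrableOn_compact
      (Metric.isCompact_of_isClosed_isBounded (isClosed_slab φ l h) hbdd)
  have hpos : 0 < μ.real (slab φ l h) := ENNReal.toReal_pos
    (Measure.measure_pos_of_nonempty_interior μ hne).ne' hbdd.measure_lt_top.ne
  refine hsymm ⟨⨍ x in slab φ l h, x ∂μ, image_sub_left_slab_eq_image_sub_right fun i ↦ ?_⟩
  rw [setAverage_eq, map_smul, ← (φ i).integral_comp_comm hid,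
    hμ.setIntegral_slab_apply he hpar hinj hne hl hh hfacet i, smul_eq_mul]
  field_simp

end Barycentre

section EuclideanCharts

/-- The splitting of `ℝⁿ⁺¹` into the first coordinate and the remaining ones. The second factor
carries the supremum norm, which plays no metric role, only a measure-theoretic one. -/
noncomputable def consChart (n : ℕ) : EuclideanSpace ℝ (Fin (n + 1)) ≃L[ℝ] ℝ × (Fin n → ℝ) :=
  (EuclideanSpace.equiv (Fin (n + 1)) ℝ).trans (Fin.consEquivL ℝ fun _ : Fin (n + 1) ↦ ℝ).symm

theorem consChart_fst {n : ℕ} (x : EuclideanSpace ℝ (Fin (n + 1))) : (consChart n x).1 = x 0 := rfl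

theorem measurePreserving_consChart (n : ℕ) : MeasurePreserving (consChart n) :=
  (volume_preserving_piFinSuccAbove (fun _ : Fin (n + 1) ↦ ℝ) 0).comp
    (PiLp.volume_preserving_ofLp (Fin (n + 1)))

theorem exists_linearIsometryEquiv_apply_eq {E : Type*} [NormedAddCommGroup E]
    [InnerProductSpace ℝ E] {u v : E} (huv : ‖u‖ = ‖v‖) : ∃ T : E ≃ₗᵢ[ℝ] E, T u = v :=
  ⟨(ℝ ∙ (u - v))ᗮ.reflection, Submodule.reflection_sub huv⟩

theorem exists_linearIsometryEquiv_isSlicingChart {n : ℕ}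
    {f : StrongDual ℝ (EuclideanSpace ℝ (Fin (n + 1)))} (hf : ‖f‖ = 1) :
    ∃ T : EuclideanSpace ℝ (Fin (n + 1)) ≃ₗᵢ[ℝ] EuclideanSpace ℝ (Fin (n + 1)),
      IsSlicingChart f (T.toContinuousLinearEquiv.trans (consChart n)) volume volume := by
  let u := (InnerProductSpace.toDual ℝ _).symm f
  obtain ⟨T, hT⟩ := exists_linearIsometryEquiv_apply_eq
    (u := u) (v := EuclideanSpace.single 0 (1 : ℝ)) (by simp [u, hf])
  refine ⟨T, fun x ↦ ?_, (measurePreserving_consChart n).comp T.measurePreserving⟩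
  calc (consChart n (T x)).1 = ⟪EuclideanSpace.single 0 (1 : ℝ), T x⟫_ℝ := by
        simp [consChart_fst, EuclideanSpace.inner_single_left]
    _ = ⟪u, x⟫_ℝ := by rw [← hT, T.inner_map_map]
    _ = f x := InnerProductSpace.toDual_symm_apply

end EuclideanCharts

section FourierInterval

open Set
open scoped FourierTransform

theorem two_pi_I_mul_integral_fourierChar {σ : ℝ} (hσ : σ ≠ 0) (a b : ℝ) :
    2 * π * I * σ * ∫ r in a..b, (𝐞 (σ * r) : ℂ) = 𝐞 (σ * b) - 𝐞 (σ * a) := by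
  have hc : 2 * π * I * (σ : ℂ) ≠ 0 := by simp [hσ, Real.pi_ne_zero]
  have hexp (r : ℝ) : (𝐞 (σ * r) : ℂ) = exp (2 * π * I * σ * r) := by
    rw [Real.fourierChar_apply]
    push_cast
    ring_nf
  simp only [hexp]
  rw [integral_exp_mul_complex hc, mul_div_cancel₀ _ hc]

variable {κ : Type*} {α d : κ → ℝ} {t b : κ}

theorem exists_forall_mul_le_eq_Icc [Finite κ] (ht : 0 < α t) (hb : α b < 0)
    (hne : {r : ℝ | ∀ k, α k * r ≤ d k}.Nonempty) :
    ∃ p q, 0 < α p ∧ α q < 0 ∧ {r : ℝ | ∀ k, α k * r ≤ d k} = Icc (d q / α q) (d p / α p) := by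
  cases nonempty_fintype κ
  obtain ⟨p, hp, hp_min⟩ := Finset.exists_min_image {k | 0 < α k} (fun k ↦ d k / α k) ⟨t, by simpa⟩
  obtain ⟨q, hq, hq_max⟩ := Finset.exists_max_image {k | α k < 0} (fun k ↦ d k / α k) ⟨b, by simpa⟩
  simp only [Finset.mem_filter, Finset.mem_univ, true_and] at hp hp_min hq hq_max
  refine ⟨p, q, hp, hq, Subset.antisymm (fun r hr ↦ ?_) fun r hr k ↦ ?_⟩
  · exact ⟨(div_le_iff_of_neg' hq).2 (hr q), (le_div_iff₀' hp).2 (hr p)⟩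
  · rcases lt_trichotomy (α k) 0 with hk | hk | hk
    · exact (div_le_iff_of_neg' hk).1 ((hq_max k hk).trans hr.1)
    · obtain ⟨r₀, hr₀⟩ := hne
      simpa [hk] using hr₀ k
    · exact (le_div_iff₀' hk).1 (hr.2.trans (hp_min k hk))

theorem two_pi_I_mul_setIntegral_fourierChar_eq_sum [Fintype κ] (ht : 0 < α t) (hb : α b < 0)
    (hdist : Pairwise fun k m ↦ α k ≠ 0 → α m ≠ 0 → d k / α k ≠ d m / α m)
    {σ : ℝ} (hσ : σ ≠ 0) :
    2 * π * I * σ * ∫ r in {r : ℝ | ∀ k, α k * r ≤ d k}, (𝐞 (σ * r) : ℂ) =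
      ∑ k, (Real.sign (α k) : ℂ) *
        {r : ℝ | ∀ m, α m * r ≤ d m}.indicator (fun r ↦ (𝐞 (σ * r) : ℂ)) (d k / α k) := by
  classical
  rcases {r : ℝ | ∀ k, α k * r ≤ d k}.eq_empty_or_nonempty with hJ | hJ
  · simp [hJ]
  have hend {k : κ} : d k / α k ∈ {r : ℝ | ∀ m, α m * r ≤ d m} →
      (0 < α k → IsGreatest {r : ℝ | ∀ m, α m * r ≤ d m} (d k / α k)) ∧
      (α k < 0 → IsLeast {r : ℝ | ∀ m, α m * r ≤ d m} (d k / α k)) := fun hk ↦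
    ⟨fun hpos ↦ ⟨hk, fun r hr ↦ (le_div_iff₀' hpos).2 (hr k)⟩,
      fun hneg ↦ ⟨hk, fun r hr ↦ (div_le_iff_of_neg' hneg).2 (hr k)⟩⟩
  obtain ⟨p, q, hp, hq, hIcc⟩ := exists_forall_mul_le_eq_Icc ht hb hJ
  rw [hIcc] at hJ hend ⊢
  have hle : d q / α q ≤ d p / α p := nonempty_Icc.1 hJ
  have hpq : p ≠ q := by
    rintro rfl
    exact hp.not_gt hq
  have hrest : ∀ k ∉ ({p, q} : Finset κ), (Real.sign (α k) : ℂ) *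
      (Icc (d q / α q) (d p / α p)).indicator (fun r ↦ (𝐞 (σ * r) : ℂ)) (d k / α k) = 0 := by
    intro k hk
    simp only [Finset.mem_insert, Finset.mem_singleton, not_or] at hk
    rcases lt_trichotomy (α k) 0 with hk₀ | hk₀ | hk₀
    · rw [indicator_of_notMem fun hmem ↦ hdist hk.2 hk₀.ne hq.ne
        (((hend hmem).2 hk₀).unique (isLeast_Icc hle)), mul_zero]
    · simp [hk₀]
    · rw [indicator_of_notMem fun hmem ↦ hdist hk.1 hk₀.ne' hp.ne'
        (((hend hmem).1 hk₀).unique (isGreatest_Icc hle)), mul_zero]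
  rw [integral_Icc_eq_integral_Ioc, ← intervalIntegral.integral_of_le hle,
    two_pi_I_mul_integral_fourierChar hσ,
    ← Finset.sum_subset (Finset.subset_univ {p, q}) fun k _ hk ↦ hrest k hk,
    Finset.sum_pair hpq, Real.sign_of_pos hp, Real.sign_of_neg hq,
    indicator_of_mem (left_mem_Icc.2 hle), indicator_of_mem (right_mem_Icc.2 hle)]
  push_cast
  ring

end FourierInterval

section FacetShadows

open Set Filter Topology
open scoped FourierTransform

variable {Y : Type*} [NormedAddCommGroup Y] [NormedSpace ℝ Y] {κ : Type*}
  {ψ : κ → StrongDual ℝ (ℝ × Y)} {k : κ}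

/-- The height at which the line over `y` in the first coordinate direction meets the hyperplane
`ψ k x = c k`; meaningless if that hyperplane is parallel to the direction, i.e. if
`ψ k (1, 0) = 0`. -/
noncomputable def facetHeight (ψ : κ → StrongDual ℝ (ℝ × Y)) (k : κ) (c : κ → ℝ) (y : Y) : ℝ :=
  (c k - ψ k (0, y)) / ψ k (1, 0)

/-- The projection along the first coordinate of the facet `ψ k x = c k` of `polyhedron ψ c`. -/
def facetShadow (ψ : κ → StrongDual ℝ (ℝ × Y)) (k : κ) (c : κ → ℝ) : Set Y :=
  {y | (facetHeight ψ k c y, y) ∈ polyhedron ψ c}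

/-- The hyperplanes `ψ k x = c k` are pairwise distinct. The condition is not imposed when
`ψ k = 0`, where there is no hyperplane. -/
def PairwiseDistinctHyperplanes {E : Type*} [NormedAddCommGroup E] [NormedSpace ℝ E]
    (ψ : κ → StrongDual ℝ E) (c : κ → ℝ) : Prop :=
  Pairwise fun k m ↦ ψ k ≠ 0 → ∀ t : ℝ, ψ m = t • ψ k → c m ≠ t * c k

theorem PairwiseDistinctHyperplanes.eventually {E : Type*} [NormedAddCommGroup E]
    [NormedSpace ℝ E] [Finite κ] {ψ : κ → StrongDual ℝ E} {c₀ : κ → ℝ}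
    (h : PairwiseDistinctHyperplanes ψ c₀) : ∀ᶠ c in 𝓝 c₀, PairwiseDistinctHyperplanes ψ c := by
  simp only [PairwiseDistinctHyperplanes, Pairwise, eventually_all]
  intro k m hkm hk
  by_cases hpar : ∃ t : ℝ, ψ m = t • ψ k
  · obtain ⟨t, ht⟩ := hpar
    have hne : ∀ᶠ c : κ → ℝ in 𝓝 c₀, c m ≠ t * c k :=
      (isOpen_ne_fun (continuous_apply m) (by fun_prop)).mem_nhds (h hkm hk t ht)
    filter_upwards [hne] with c hc s hs
    rwa [smul_left_injective ℝ hk (hs.symm.trans ht)]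
  · exact Eventually.of_forall fun c t ht ↦ absurd ⟨t, ht⟩ hpar

theorem continuous_facetHeight (ψ : κ → StrongDual ℝ (ℝ × Y)) (k : κ) :
    Continuous fun p : (κ → ℝ) × Y ↦ facetHeight ψ k p.1 p.2 := by
  unfold facetHeight
  fun_prop

theorem continuous_facetHeight_right (ψ : κ → StrongDual ℝ (ℝ × Y)) (k : κ) (c : κ → ℝ) :
    Continuous (facetHeight ψ k c) :=
  (continuous_facetHeight ψ k).comp (.prodMk_right c)

theorem apply_facetHeight_self (hk : ψ k (1, 0) ≠ 0) (c : κ → ℝ) (y : Y) :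
    ψ k (facetHeight ψ k c y, y) = c k := by
  rw [apply_prodMk, facetHeight, mul_div_cancel₀ _ hk, sub_add_cancel]

theorem isClosed_facetShadow (ψ : κ → StrongDual ℝ (ℝ × Y)) (k : κ) (c : κ → ℝ) :
    IsClosed (facetShadow ψ k c) :=
  (isClosed_polyhedron ψ c).preimage ((continuous_facetHeight_right ψ k c).prodMk continuous_id)

theorem facetShadow_subset_image_snd (ψ : κ → StrongDual ℝ (ℝ × Y)) (k : κ) (c : κ → ℝ) :
    facetShadow ψ k c ⊆ Prod.snd '' polyhedron ψ c :=
  fun _ hy ↦ ⟨_, hy, rfl⟩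

variable [FiniteDimensional ℝ Y]

theorem isCompact_facetShadow (hb : ∀ c, Bornology.IsBounded (polyhedron ψ c)) (k : κ)
    (c : κ → ℝ) : IsCompact (facetShadow ψ k c) :=
  Metric.isCompact_of_isClosed_isBounded (isClosed_facetShadow ψ k c)
    ((hb c).image_snd.subset (facetShadow_subset_image_snd ψ k c))

variable [MeasurableSpace Y] [BorelSpace Y] (ν : Measure Y) [ν.IsAddHaarMeasure]

theorem PairwiseDistinctHyperplanes.ae_apply_facetHeight_ne {c : κ → ℝ}
    (h : PairwiseDistinctHyperplanes ψ c) {m : κ} (hkm : k ≠ m) (hk : ψ k (1, 0) ≠ 0) :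
    ∀ᵐ y ∂ν, ψ m (facetHeight ψ k c y, y) ≠ c m := by
  let s := ψ m (1, 0) / ψ k (1, 0)
  let f : StrongDual ℝ Y := (ψ m - s • ψ k) ∘L .inr ℝ ℝ Y
  have hheight (y : Y) : ψ m (facetHeight ψ k c y, y) = f y + s * c k := by
    rw [apply_prodMk, facetHeight]
    simp only [f, s, ContinuousLinearMap.comp_apply,
      ContinuousLinearMap.inr_apply, sub_apply, smul_apply, smul_eq_mul]
    ring
  have hf : f ≠ 0 ∨ c m - s * c k ≠ 0 := by
    by_contra! H
    refine h hkm (fun h₀ ↦ hk (by simp [h₀])) s (ContinuousLinearMap.ext fun p ↦ ?_)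
      (sub_eq_zero.1 H.2)
    have hp : ψ m (0, p.2) - s * ψ k (0, p.2) = 0 := DFunLike.congr_fun H.1 p.2
    rw [smul_apply, smul_eq_mul, ← Prod.mk.eta (p := p), apply_prodMk (ψ m), apply_prodMk (ψ k),
      mul_add, ← mul_assoc, div_mul_cancel₀ _ hk, sub_eq_zero.1 hp]
  filter_upwards [ae_apply_ne ν f _ hf] with y hy hym
  exact hy (eq_sub_of_add_eq ((hheight y).symm.trans hym))

theorem PairwiseDistinctHyperplanes.ae_eventually_mem_facetShadow_iff [Finite κ] {c₀ : κ → ℝ}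
    (h : PairwiseDistinctHyperplanes ψ c₀) (hk : ψ k (1, 0) ≠ 0) :
    ∀ᵐ y ∂ν, ∀ᶠ c in 𝓝 c₀, y ∈ facetShadow ψ k c ↔ y ∈ facetShadow ψ k c₀ := by
  have hne : ∀ᵐ y ∂ν, ∀ m, k ≠ m → ψ m (facetHeight ψ k c₀ y, y) ≠ c₀ m := by
    simp only [ae_all_iff]
    exact fun m hkm ↦ h.ae_apply_facetHeight_ne ν hkm hk
  filter_upwards [hne] with y hy
  have hm : ∀ᶠ c in 𝓝 c₀, ∀ m,
      ψ m (facetHeight ψ k c y, y) ≤ c m ↔ ψ m (facetHeight ψ k c₀ y, y) ≤ c₀ m := by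
    refine eventually_all.2 fun m ↦ ?_
    rcases eq_or_ne k m with rfl | hkm
    · exact Eventually.of_forall fun c ↦
        iff_of_true (apply_facetHeight_self hk c y).le (apply_facetHeight_self hk c₀ y).le
    · have hcont : Continuous fun c : κ → ℝ ↦ ψ m (facetHeight ψ k c y, y) :=
        (ψ m).continuous.comp
          (((continuous_facetHeight ψ k).comp (.prodMk_left y)).prodMk continuous_const)
      exact eventually_le_iff_of_ne hcont.continuousAt (continuous_apply m).continuousAt (hy m hkm)
  filter_upwards [hm] with c hc using forall_congr' hc

end FacetShadows

section FacetFormula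

open Set Filter Topology
open scoped FourierTransform

variable {Y : Type*} [NormedAddCommGroup Y] [NormedSpace ℝ Y] {κ : Type*}
  {ψ : κ → StrongDual ℝ (ℝ × Y)} {c : κ → ℝ} {t b : κ}

theorem two_pi_I_mul_integral_polyhedron_slice [Fintype κ] (ht : 0 < ψ t (1, 0))
    (hb : ψ b (1, 0) < 0) (w : StrongDual ℝ Y) {σ : ℝ} (hσ : σ ≠ 0) {y : Y}
    (hy : Pairwise fun k m ↦ ψ k (1, 0) ≠ 0 → ψ m (facetHeight ψ k c y, y) ≠ c m) :
    2 * π * I * σ *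
        ∫ r, (polyhedron ψ c).indicator (fun x ↦ (𝐞 (σ * x.1 + w x.2) : ℂ)) (r, y) =
      ∑ k, (Real.sign (ψ k (1, 0)) : ℂ) *
        (facetShadow ψ k c).indicator (fun y ↦ (𝐞 (σ * facetHeight ψ k c y + w y) : ℂ)) y := by
  let J := {r : ℝ | ∀ k, ψ k (1, 0) * r ≤ c k - ψ k (0, y)}
  have hmem (r : ℝ) : (r, y) ∈ polyhedron ψ c ↔ r ∈ J :=
    forall_congr' fun k ↦ by rw [apply_prodMk, le_sub_iff_add_le]
  have hsplit (r : ℝ) : (𝐞 (σ * r + w y) : ℂ) = 𝐞 (w y) * 𝐞 (σ * r) := by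
    rw [add_comm, AddChar.map_add_eq_mul, Circle.coe_mul]
  have hJ : MeasurableSet J :=
    ((isClosed_polyhedron ψ c).preimage (.prodMk_left y)).measurableSet.congr (ext hmem)
  have hdist : Pairwise fun k m ↦ ψ k (1, 0) ≠ 0 → ψ m (1, 0) ≠ 0 →
      facetHeight ψ k c y ≠ facetHeight ψ m c y := fun k m hkm hk hm heq ↦
    hy hkm hk (heq ▸ apply_facetHeight_self hm c y)
  have hslice : ∫ r, (polyhedron ψ c).indicator (fun x ↦ (𝐞 (σ * x.1 + w x.2) : ℂ)) (r, y) =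
      𝐞 (w y) * ∫ r in J, (𝐞 (σ * r) : ℂ) := by
    rw [← integral_indicator hJ, ← integral_const_mul]
    refine integral_congr_ae (Eventually.of_forall fun r ↦ ?_)
    by_cases hr : r ∈ J
    · simp only [indicator_of_mem hr, indicator_of_mem ((hmem r).2 hr), hsplit]
    · simp only [indicator_of_notMem hr, indicator_of_notMem (mt (hmem r).1 hr), mul_zero]
  have hinterval : 2 * π * I * σ * ∫ r in J, (𝐞 (σ * r) : ℂ) = ∑ k, (Real.sign (ψ k (1, 0)) : ℂ) *
      J.indicator (fun r ↦ (𝐞 (σ * r) : ℂ)) (facetHeight ψ k c y) :=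
    two_pi_I_mul_setIntegral_fourierChar_eq_sum (α := fun k ↦ ψ k (1, 0)) ht hb hdist hσ
  rw [hslice, mul_left_comm, hinterval, Finset.mul_sum]
  refine Finset.sum_congr rfl fun k _ ↦ ?_
  rw [mul_left_comm]
  by_cases hk : y ∈ facetShadow ψ k c
  · rw [indicator_of_mem hk, indicator_of_mem ((hmem _).1 hk), hsplit]
  · rw [indicator_of_notMem hk, indicator_of_notMem (mt (hmem _).2 hk), mul_zero]

variable [MeasurableSpace Y] (ν : Measure Y)

/-- The contribution of the facet `ψ k x = c k` to the Fourier transform of the indicator function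
of `polyhedron ψ c` at the frequency `(σ, w)`. -/
noncomputable def facetTransform (ψ : κ → StrongDual ℝ (ℝ × Y)) (k : κ) (c : κ → ℝ)
    (w : StrongDual ℝ Y) (σ : ℝ) : ℂ :=
  ∫ y in facetShadow ψ k c, (𝐞 (σ * facetHeight ψ k c y + w y) : ℂ) ∂ν

variable [FiniteDimensional ℝ Y] [BorelSpace Y] [ν.IsAddHaarMeasure]

theorem PairwiseDistinctHyperplanes.two_pi_I_mul_integral_polyhedron [Fintype κ]
    (hdist : PairwiseDistinctHyperplanes ψ c)
    (hbdd : ∀ c, Bornology.IsBounded (polyhedron ψ c)) (ht : 0 < ψ t (1, 0))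
    (hb : ψ b (1, 0) < 0) (w : StrongDual ℝ Y) {σ : ℝ} (hσ : σ ≠ 0) :
    2 * π * I * σ * ∫ x in polyhedron ψ c, (𝐞 (σ * x.1 + w x.2) : ℂ) ∂(volume.prod ν) =
      ∑ k, (Real.sign (ψ k (1, 0)) : ℂ) * facetTransform ν ψ k c w σ := by
  have hmeas := (isClosed_polyhedron ψ c).measurableSet
  have hmeas_shadow (k : κ) := (isClosed_facetShadow ψ k c).measurableSet
  have hint : Integrable ((polyhedron ψ c).indicator fun x ↦ (𝐞 (σ * x.1 + w x.2) : ℂ))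
      (volume.prod ν) :=
    (ContinuousOn.integrableOn_compact (Metric.isCompact_of_isClosed_isBounded
      (isClosed_polyhedron ψ c) (hbdd c)) (by fun_prop)).integrable_indicator hmeas
  have hint_shadow (k : κ) : Integrable ((facetShadow ψ k c).indicator fun y ↦
      (𝐞 (σ * facetHeight ψ k c y + w y) : ℂ)) ν :=
    (ContinuousOn.integrableOn_compact (isCompact_facetShadow hbdd k c)
      (by unfold facetHeight; fun_prop)).integrable_indicator (hmeas_shadow k)
  simp only [facetTransform, ← integral_indicator hmeas, ← integral_indicator (hmeas_shadow _)]
  rw [integral_prod_symm _ hint]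
  simp only [← integral_const_mul]
  rw [← integral_finsetSum _ fun k _ ↦ (hint_shadow k).const_mul _]
  refine integral_congr_ae ?_
  have hae : ∀ᵐ y ∂ν, ∀ k m, k ≠ m → ψ k (1, 0) ≠ 0 → ψ m (facetHeight ψ k c y, y) ≠ c m := by
    simp only [ae_all_iff]
    exact fun k m hkm hk ↦ hdist.ae_apply_facetHeight_ne ν hkm hk
  filter_upwards [hae] with y hy
  rw [integral_const_mul]
  exact two_pi_I_mul_integral_polyhedron_slice ht hb w hσ fun k m ↦ hy k m

end FacetFormula

section FacetAsymptotics

open Set Filter Topology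
open scoped FourierTransform

variable {Y : Type*} [NormedAddCommGroup Y] [NormedSpace ℝ Y] [FiniteDimensional ℝ Y]
  [MeasurableSpace Y] [BorelSpace Y] (ν : Measure Y) [ν.IsAddHaarMeasure] {κ : Type*}
  {ψ : κ → StrongDual ℝ (ℝ × Y)} {k : κ} {c₀ : κ → ℝ}

theorem tendsto_integral_norm_indicator_facetShadow_sub [Finite κ]
    (hbdd : ∀ c, Bornology.IsBounded (polyhedron ψ c))
    (hdist : PairwiseDistinctHyperplanes ψ c₀) (hk : ψ k (1, 0) ≠ 0) :
    Tendsto (fun q : (κ → ℝ) × StrongDual ℝ Y ↦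
      ∫ y, ‖(facetShadow ψ k q.1).indicator (fun y ↦ (𝐞 (q.2 y) : ℂ)) y -
        (facetShadow ψ k c₀).indicator 1 y‖ ∂ν) (𝓝 (c₀, 0)) (𝓝 0) := by
  let B := Prod.snd '' polyhedron ψ (c₀ + 1)
  have hB : IsCompact B := (Metric.isCompact_of_isClosed_isBounded (isClosed_polyhedron ψ _)
    (hbdd _)).image continuous_snd
  have hsub : ∀ᶠ c in 𝓝 c₀, facetShadow ψ k c ⊆ B :=
    (eventually_polyhedron_subset ψ c₀).mono fun c hc ↦
      (facetShadow_subset_image_snd ψ k c).trans (image_mono hc)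
  rw [← integral_zero Y ℝ]
  refine tendsto_integral_filter_of_dominated_convergence (B.indicator 2)
    (Eventually.of_forall fun q ↦ ?_) ?_ ?_ ?_
  · exact (((by fun_prop : Continuous fun y ↦ (𝐞 (q.2 y) : ℂ)).aestronglyMeasurable.indicator
      (isClosed_facetShadow ψ k q.1).measurableSet).sub
      (aestronglyMeasurable_one.indicator (isClosed_facetShadow ψ k c₀).measurableSet)).norm
  · filter_upwards [continuousAt_fst.eventually hsub] with q hq
    refine Eventually.of_forall fun y ↦ ?_
    by_cases hy : y ∈ B
    · rw [indicator_of_mem hy, norm_norm, Pi.ofNat_apply, ← one_add_one_eq_two]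
      exact norm_sub_le_of_le ((norm_indicator_le_norm_self _ _).trans (Circle.norm_coe _).le)
        ((norm_indicator_le_norm_self _ _).trans norm_one.le)
    · simp [hy, indicator_of_notMem (notMem_subset hq hy),
        indicator_of_notMem (notMem_subset hsub.self_of_nhds hy)]
  · exact (integrable_indicator_iff hB.measurableSet).2
      (continuousOn_const.integrableOn_compact hB)
  · filter_upwards [hdist.ae_eventually_mem_facetShadow_iff ν hk] with y hy
    have hlim : Tendsto (fun q : (κ → ℝ) × StrongDual ℝ Y ↦ ‖(𝐞 (q.2 y) : ℂ) - 1‖)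
        (𝓝 (c₀, 0)) (𝓝 0) := Continuous.tendsto' (by fun_prop) _ _ (by simp)
    refine squeeze_zero' (Eventually.of_forall fun _ ↦ norm_nonneg _) ?_ hlim
    filter_upwards [continuousAt_fst.eventually hy] with q hq
    by_cases h : y ∈ facetShadow ψ k c₀
    · simp [indicator_of_mem h, indicator_of_mem (hq.2 h)]
    · simp [indicator_of_notMem h, indicator_of_notMem (mt hq.1 h)]

theorem norm_facetTransform_sub_le (hbdd : ∀ c, Bornology.IsBounded (polyhedron ψ c)) (k : κ)
    (c c₀ : κ → ℝ) (w : StrongDual ℝ Y) (σ : ℝ) :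
    ‖‖facetTransform ν ψ k c w σ‖ -
        ‖∫ y in facetShadow ψ k c₀, (𝐞 (σ * facetHeight ψ k 0 y) : ℂ) ∂ν‖‖ ≤
      ∫ y, ‖(facetShadow ψ k c).indicator (fun y ↦ (𝐞 (w y) : ℂ)) y -
        (facetShadow ψ k c₀).indicator 1 y‖ ∂ν := by
  let A (y : Y) : ℂ := 𝐞 (σ * facetHeight ψ k 0 y)
  have hA : Continuous A := by
    unfold A facetHeight
    fun_prop
  have hfactor (y : Y) : (𝐞 (σ * facetHeight ψ k c y + w y) : ℂ) =
      𝐞 (σ * (c k / ψ k (1, 0))) * (A y * 𝐞 (w y)) := by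
    simp only [A, ← Circle.coe_mul, ← AddChar.map_add_eq_mul, facetHeight, Pi.zero_apply]
    ring_nf
  have hmeas (c : κ → ℝ) := (isClosed_facetShadow ψ k c).measurableSet
  have hint {c : κ → ℝ} {f : Y → ℂ} (hf : Continuous f) :
      Integrable ((facetShadow ψ k c).indicator fun y ↦ A y * f y) ν :=
    ((hA.mul hf).continuousOn.integrableOn_compact
      (isCompact_facetShadow hbdd k c)).integrable_indicator (hmeas c)
  calc ‖‖facetTransform ν ψ k c w σ‖ - ‖∫ y in facetShadow ψ k c₀, A y ∂ν‖‖
      = ‖‖∫ y in facetShadow ψ k c, A y * 𝐞 (w y) ∂ν‖ -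
          ‖∫ y in facetShadow ψ k c₀, A y * 1 ∂ν‖‖ := by
        simp only [facetTransform, hfactor, integral_const_mul, norm_mul, Circle.norm_coe, one_mul,
          mul_one]
    _ ≤ ‖∫ y in facetShadow ψ k c, A y * 𝐞 (w y) ∂ν -
          ∫ y in facetShadow ψ k c₀, A y * 1 ∂ν‖ := abs_norm_sub_norm_le _ _
    _ ≤ ∫ y, ‖(facetShadow ψ k c).indicator (fun y ↦ A y * 𝐞 (w y)) y -
          (facetShadow ψ k c₀).indicator (fun y ↦ A y * 1) y‖ ∂ν := by
        rw [← integral_indicator (hmeas c), ← integral_indicator (hmeas c₀),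
          ← integral_sub (hint (by fun_prop)) (hint continuous_const)]
        exact norm_integral_le_integral_norm _
    _ = _ := by
        refine integral_congr_ae (Eventually.of_forall fun y ↦ ?_)
        simp only [indicator_mul_right, ← mul_sub, norm_mul, A, Circle.norm_coe, one_mul]
        rfl

theorem tendsto_norm_facetTransform_sub [Finite κ]
    (hbdd : ∀ c, Bornology.IsBounded (polyhedron ψ c))
    (hdist : PairwiseDistinctHyperplanes ψ c₀) (hk : ψ k (1, 0) ≠ 0) :
    Tendsto (fun p : ((κ → ℝ) × StrongDual ℝ Y) × ℝ ↦ ‖facetTransform ν ψ k p.1.1 p.1.2 p.2‖ -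
      ‖∫ y in facetShadow ψ k c₀, (𝐞 (p.2 * facetHeight ψ k 0 y) : ℂ) ∂ν‖)
      (𝓝 (c₀, 0) ×ˢ cocompact ℝ) (𝓝 0) :=
  squeeze_zero_norm (fun _ ↦ norm_facetTransform_sub_le ν hbdd k _ c₀ _ _)
    ((tendsto_integral_norm_indicator_facetShadow_sub ν hbdd hdist hk).comp tendsto_fst)

theorem tendsto_setIntegral_fourierChar_mul_cocompact {f : StrongDual ℝ Y} (hf : f ≠ 0) {s : Set Y}
    (hs : MeasurableSet s) :
    Tendsto (fun σ : ℝ ↦ ∫ y in s, (𝐞 (σ * f y) : ℂ) ∂ν) (cocompact ℝ) (𝓝 0) := by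
  have hline : Tendsto (fun σ : ℝ ↦ σ • -f) (cocompact ℝ) (cocompact (StrongDual ℝ Y)) :=
    (LinearMap.isClosedEmbedding_of_injective (f := LinearMap.toSpanSingleton ℝ _ (-f))
      (LinearMap.ker_eq_bot.2 (smul_left_injective ℝ (neg_ne_zero.2 hf)))).tendsto_cocompact
  refine ((tendsto_integral_exp_smul_cocompact (s.indicator 1 : Y → ℂ) ν).comp hline).congr
    fun σ ↦ ?_
  rw [← integral_indicator hs, Function.comp_apply]
  refine integral_congr_ae (Eventually.of_forall fun y ↦ ?_)
  by_cases hy : y ∈ s <;> simp [hy, Circle.smul_def]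

theorem tendsto_facetTransform_zero [Finite κ]
    (hbdd : ∀ c, Bornology.IsBounded (polyhedron ψ c))
    (hdist : PairwiseDistinctHyperplanes ψ c₀) (hk : ψ k (1, 0) ≠ 0)
    (hk₀ : ψ k ∘L .inr ℝ ℝ Y ≠ 0) :
    Tendsto (fun p : ((κ → ℝ) × StrongDual ℝ Y) × ℝ ↦ facetTransform ν ψ k p.1.1 p.1.2 p.2)
      (𝓝 (c₀, 0) ×ˢ cocompact ℝ) (𝓝 0) := by
  let f : StrongDual ℝ Y := (-(ψ k (1, 0))⁻¹) • (ψ k ∘L .inr ℝ ℝ Y)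
  have hf : facetHeight ψ k 0 = f := by
    ext y
    simp only [facetHeight, f, Pi.zero_apply, smul_apply, smul_eq_mul,
      ContinuousLinearMap.comp_apply, ContinuousLinearMap.inr_apply]
    ring
  have hf₀ : f ≠ 0 := smul_ne_zero (neg_ne_zero.2 (inv_ne_zero hk)) hk₀
  have hRL := (tendsto_setIntegral_fourierChar_mul_cocompact ν hf₀
    (isClosed_facetShadow ψ k c₀).measurableSet).norm.comp
    (tendsto_snd (f := 𝓝 (c₀, (0 : StrongDual ℝ Y))))
  have hnorm := (tendsto_norm_facetTransform_sub ν hbdd hdist hk).add hRL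
  simpa [hf, tendsto_zero_iff_norm_tendsto_zero] using hnorm

theorem tendsto_norm_facetTransform [Finite κ]
    (hbdd : ∀ c, Bornology.IsBounded (polyhedron ψ c))
    (hdist : PairwiseDistinctHyperplanes ψ c₀) (hk : ψ k (1, 0) ≠ 0)
    (hk₀ : ψ k ∘L .inr ℝ ℝ Y = 0) :
    Tendsto (fun p : ((κ → ℝ) × StrongDual ℝ Y) × ℝ ↦ ‖facetTransform ν ψ k p.1.1 p.1.2 p.2‖)
      (𝓝 (c₀, 0) ×ˢ cocompact ℝ) (𝓝 (ν.real (facetShadow ψ k c₀))) := by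
  have hheight (y : Y) : facetHeight ψ k 0 y = 0 := by
    have hy : ψ k (0, y) = 0 := DFunLike.congr_fun hk₀ y
    simp [facetHeight, hy]
  have hnorm := (tendsto_norm_facetTransform_sub ν hbdd hdist hk).add_const
    (ν.real (facetShadow ψ k c₀))
  simpa [hheight, abs_of_nonneg measureReal_nonneg] using hnorm

theorem PairwiseDistinctHyperplanes.abs_norm_facetTransform_sub_le [Fintype κ] [DecidableEq κ]
    {c : κ → ℝ} (hdist : PairwiseDistinctHyperplanes ψ c)
    (hbdd : ∀ c, Bornology.IsBounded (polyhedron ψ c)) {t b : κ} (ht : 0 < ψ t (1, 0))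
    (hb : ψ b (1, 0) < 0) {w : StrongDual ℝ Y} {σ : ℝ} (hσ : σ ≠ 0)
    (h₀ : ∫ x in polyhedron ψ c, (𝐞 (σ * x.1 + w x.2) : ℂ) ∂(volume.prod ν) = 0) :
    |‖facetTransform ν ψ t c w σ‖ - ‖facetTransform ν ψ b c w σ‖| ≤
      ‖∑ k ∈ (Finset.univ.erase t).erase b,
        (Real.sign (ψ k (1, 0)) : ℂ) * facetTransform ν ψ k c w σ‖ := by
  have hbt : b ≠ t := by
    rintro rfl
    exact hb.not_gt ht
  have hsum : ∑ k, (Real.sign (ψ k (1, 0)) : ℂ) * facetTransform ν ψ k c w σ = 0 := by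
    rw [← hdist.two_pi_I_mul_integral_polyhedron ν hbdd ht hb w hσ, h₀, mul_zero]
  rw [← Finset.add_sum_erase _ _ (Finset.mem_univ t),
    ← Finset.add_sum_erase _ _ (Finset.mem_erase.2 ⟨hbt, Finset.mem_univ b⟩),
    Real.sign_of_pos ht, Real.sign_of_neg hb, ofReal_neg, ofReal_one, one_mul, neg_one_mul,
    ← add_assoc, ← sub_eq_add_neg] at hsum
  rw [← norm_neg (Finset.sum _ _), ← eq_neg_of_add_eq_zero_left hsum]
  exact abs_norm_sub_norm_le _ _

theorem eventually_setIntegral_polyhedron_ne_zero [Finite κ]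
    (hbdd : ∀ c, Bornology.IsBounded (polyhedron ψ c))
    (hdist : PairwiseDistinctHyperplanes ψ c₀) {t b : κ}
    (ht : 0 < ψ t (1, 0)) (ht₀ : ψ t ∘L .inr ℝ ℝ Y = 0)
    (hb : ψ b (1, 0) < 0) (hb₀ : ψ b ∘L .inr ℝ ℝ Y = 0)
    (hrest : ∀ k, k ≠ t → k ≠ b → ψ k ∘L .inr ℝ ℝ Y ≠ 0)
    (hne : ν.real (facetShadow ψ t c₀) ≠ ν.real (facetShadow ψ b c₀)) :
    ∀ᶠ p : ((κ → ℝ) × StrongDual ℝ Y) × ℝ in 𝓝 (c₀, 0) ×ˢ cocompact ℝ,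
      ∫ x in polyhedron ψ p.1.1, (𝐞 (p.2 * x.1 + p.1.2 x.2) : ℂ) ∂(volume.prod ν) ≠ 0 := by
  classical
  cases nonempty_fintype κ
  let rest (p : ((κ → ℝ) × StrongDual ℝ Y) × ℝ) : ℂ := ∑ k ∈ (Finset.univ.erase t).erase b,
    (Real.sign (ψ k (1, 0)) : ℂ) * facetTransform ν ψ k p.1.1 p.1.2 p.2
  have hrest_zero : Tendsto rest (𝓝 (c₀, 0) ×ˢ cocompact ℝ) (𝓝 0) := by
    rw [← Finset.sum_const_zero (M := ℂ) (s := (Finset.univ.erase t).erase b)]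
    refine tendsto_finsetSum _ fun k hk ↦ ?_
    obtain ⟨hkb, hkt, -⟩ := by simpa only [Finset.mem_erase] using hk
    by_cases hk₀ : ψ k (1, 0) = 0
    · simp [hk₀]
    · rw [← mul_zero (Real.sign (ψ k (1, 0)) : ℂ)]
      exact (tendsto_facetTransform_zero ν hbdd hdist hk₀ (hrest k hkt hkb)).const_mul _
  have hgap := ((tendsto_norm_facetTransform ν hbdd hdist ht.ne' ht₀).sub
    (tendsto_norm_facetTransform ν hbdd hdist hb.ne hb₀)).abs
  have hgap_pos : ‖(0 : ℂ)‖ < |ν.real (facetShadow ψ t c₀) - ν.real (facetShadow ψ b c₀)| := by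
    rw [norm_zero]
    exact abs_pos.2 (sub_ne_zero.2 hne)
  have hdist' : ∀ᶠ p : ((κ → ℝ) × StrongDual ℝ Y) × ℝ in 𝓝 (c₀, 0) ×ˢ cocompact ℝ,
      PairwiseDistinctHyperplanes ψ p.1.1 :=
    (continuousAt_fst.tendsto.comp tendsto_fst).eventually hdist.eventually
  have hσ : ∀ᶠ p : ((κ → ℝ) × StrongDual ℝ Y) × ℝ in 𝓝 (c₀, 0) ×ˢ cocompact ℝ, p.2 ≠ 0 :=
    tendsto_snd.eventually isCompact_singleton.compl_mem_cocompact
  filter_upwards [hrest_zero.norm.eventually_lt hgap hgap_pos, hdist', hσ] with p hp hdist_p hσ_p h₀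
  exact hp.not_ge (hdist_p.abs_norm_facetTransform_sub_le ν hbdd ht hb hσ_p h₀)

end FacetAsymptotics

section SlabAsymptotics

open Set Filter Topology Function
open scoped FourierTransform

variable {E : Type*} [NormedAddCommGroup E] [NormedSpace ℝ E] {ι κ : Type*}
  {φ : ι → StrongDual ℝ E} {l h : ι → ℝ} {i : ι}

theorem pairwiseDistinctHyperplanes_sumElim_neg
    (hpar : Pairwise fun i j ↦ ∀ t : ℝ, φ i ≠ t • φ j) (hlh : ∀ j, l j < h j) :
    PairwiseDistinctHyperplanes (Sum.elim φ (-φ)) (Sum.elim h (-l)) := by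
  have heq {j k : ι} {t : ℝ} (ht : φ j = t • φ k) : j = k := by_contra fun hjk ↦ hpar hjk t ht
  rintro (k | k) (m | m) hkm hk t ht hc <;>
    simp only [Sum.elim_inl, Sum.elim_inr, Pi.neg_apply, smul_neg, neg_inj] at hk ht hc
  · exact hkm (congrArg Sum.inl (heq ht).symm)
  · obtain rfl := heq (neg_eq_iff_eq_neg.1 ht |>.trans (neg_smul t (φ k)).symm)
    obtain rfl : t = -1 := smul_left_injective ℝ hk (by simpa using ht.symm)
    linarith [hlh m]
  · obtain rfl := heq (ht.trans (neg_smul t (φ k)).symm)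
    obtain rfl : t = -1 := smul_left_injective ℝ (neg_ne_zero.1 hk)
      ((neg_eq_iff_eq_neg.2 ht).symm.trans (neg_one_smul ℝ _).symm)
    linarith [hlh m]
  · exact hkm (congrArg Sum.inr (heq ht).symm)

theorem polyhedron_inter_preimage_sub (ψ : κ → StrongDual ℝ E) (c : κ → ℝ) (τ : E) :
    polyhedron ψ c ∩ (fun x ↦ x - τ) ⁻¹' polyhedron ψ c =
      polyhedron ψ fun k ↦ min (c k) (c k + ψ k τ) := by
  ext x
  simp [polyhedron, forall_and]

theorem lt_of_interior_slab_nonempty {j : ι} (hφ : φ j ≠ 0)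
    (hne : (interior (slab φ l h)).Nonempty) : l j < h j := by
  have hopen : IsOpen (φ j '' interior (slab φ l h)) :=
    (φ j).isOpenMap_of_ne_zero hφ _ isOpen_interior
  have hsub : φ j '' interior (slab φ l h) ⊆ Ioo (l j) (h j) :=
    interior_Icc (a := l j) ▸ hopen.subset_interior_iff.2
      (image_subset_iff.2 fun x hx ↦ interior_subset hx j)
  exact nonempty_Ioo.1 ((hne.image _).mono hsub)

variable {Y : Type*} [NormedAddCommGroup Y] [NormedSpace ℝ Y]

section Facets

variable {φ : ι → StrongDual ℝ (ℝ × Y)}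

theorem facetShadow_sumElim_neg_inl (hi : ∀ p, φ i p = p.1) (hlh : l i ≤ h i) :
    facetShadow (Sum.elim φ (-φ)) (.inl i) (Sum.elim h (-l)) = crossSection φ i l h (h i) := by
  ext y
  simp [facetShadow, facetHeight, ← slab_eq_polyhedron, mem_slab_iff_mem_crossSection hi, hi, hlh]

theorem facetShadow_sumElim_neg_inr (hi : ∀ p, φ i p = p.1) (hlh : l i ≤ h i) :
    facetShadow (Sum.elim φ (-φ)) (.inr i) (Sum.elim h (-l)) = crossSection φ i l h (l i) := by
  ext y
  simp [facetShadow, facetHeight, ← slab_eq_polyhedron, mem_slab_iff_mem_crossSection hi, hi, hlh]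

end Facets

variable [Finite ι] [FiniteDimensional ℝ Y] [MeasurableSpace Y] [BorelSpace Y]
  {ν : Measure Y} [ν.IsAddHaarMeasure]

theorem eventually_setIntegral_slab_inter_ne_zero {φ : ι → StrongDual ℝ (ℝ × Y)}
    (hi : ∀ p, φ i p = p.1) (hpar : Pairwise fun j k ↦ ∀ t : ℝ, φ j ≠ t • φ k)
    (hinj : Injective (ContinuousLinearMap.pi φ)) (hlh : ∀ j, l j < h j)
    (hne : ν.real (crossSection φ i l h (h i)) ≠ ν.real (crossSection φ i l h (l i))) :
    ∀ᶠ p : ((ℝ × Y) × StrongDual ℝ Y) × ℝ in 𝓝 0 ×ˢ cocompact ℝ,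
      ∫ x in slab φ l h ∩ (fun x ↦ x - p.1.1) ⁻¹' slab φ l h,
        (𝐞 (p.2 * x.1 + p.1.2 x.2) : ℂ) ∂(volume.prod ν) ≠ 0 := by
  let ψ : ι ⊕ ι → StrongDual ℝ (ℝ × Y) := Sum.elim φ (-φ)
  let c : ι ⊕ ι → ℝ := Sum.elim h (-l)
  have hrest (k : ι ⊕ ι) (hkt : k ≠ .inl i) (hkb : k ≠ .inr i) : ψ k ∘L .inr ℝ ℝ Y ≠ 0 := by
    rcases k with k | k
    · exact comp_inr_ne_zero hi (hpar (mt (congrArg Sum.inl) hkt))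
    · simpa [ψ] using comp_inr_ne_zero hi (hpar (mt (congrArg Sum.inr) hkb))
  have hpoly := eventually_setIntegral_polyhedron_ne_zero ν (ψ := ψ) (c₀ := c)
    (t := .inl i) (b := .inr i)
    (fun c ↦ polyhedron_sumElim_neg φ c ▸ isBounded_slab hinj _ _)
    (pairwiseDistinctHyperplanes_sumElim_neg hpar hlh) (by simp [ψ, hi])
    (by ext; simp [ψ, hi]) (by simp [ψ, hi]) (by ext; simp [ψ, hi]) hrest
    (by rwa [facetShadow_sumElim_neg_inl hi (hlh i).le, facetShadow_sumElim_neg_inr hi (hlh i).le])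
  have hshift : Tendsto (fun q : (ℝ × Y) × StrongDual ℝ Y ↦
      ((fun k ↦ min (c k) (c k + ψ k q.1) : ι ⊕ ι → ℝ), q.2)) (𝓝 0) (𝓝 (c, 0)) := by
    have hcont : Continuous fun q : (ℝ × Y) × StrongDual ℝ Y ↦
        ((fun k ↦ min (c k) (c k + ψ k q.1) : ι ⊕ ι → ℝ), q.2) := by fun_prop
    simpa using hcont.tendsto 0
  simp only [slab_eq_polyhedron, polyhedron_inter_preimage_sub]
  exact (hshift.prodMap tendsto_id).eventually hpoly

theorem IsSlicingChart.eventually_setIntegral_image_slab_inter_ne_zero [MeasurableSpace E]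
    {e : E ≃L[ℝ] ℝ × Y} {μ : Measure E} (he : IsSlicingChart (φ i) e μ ν)
    (hpar : Pairwise fun j k ↦ ∀ t : ℝ, φ j ≠ t • φ k)
    (hinj : Injective (ContinuousLinearMap.pi φ)) (hlh : ∀ j, l j < h j)
    (hne : sectionVolume ν φ e i l h (h i) ≠ sectionVolume ν φ e i l h (l i)) :
    ∀ᶠ p : ((ℝ × Y) × StrongDual ℝ Y) × ℝ in 𝓝 0 ×ˢ cocompact ℝ,
      ∫ x in e '' slab φ l h ∩ (fun x ↦ x - p.1.1) ⁻¹' (e '' slab φ l h),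
        (𝐞 (p.2 * x.1 + p.1.2 x.2) : ℂ) ∂(volume.prod ν) ≠ 0 := by
  have himage : e '' slab φ l h = slab (fun j ↦ φ j ∘L (e.symm : ℝ × Y →L[ℝ] E)) l h := by
    rw [e.image_eq_preimage_symm]
    rfl
  rw [himage]
  refine eventually_setIntegral_slab_inter_ne_zero he.apply_symm (fun j k hjk t ht ↦ ?_)
    (injective_pi_comp_symm e hinj) hlh hne
  exact hpar hjk t (ContinuousLinearMap.ext fun x ↦ by simpa using DFunLike.congr_fun ht (e x))

end SlabAsymptotics

section Window

open Set

theorem integral_window_mul_conj_translate {E : Type*} [MeasurableSpace E] [AddGroup E]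
    [MeasurableSub E] (μ : Measure E) {K : Set E} (hK : MeasurableSet K) (a : ℝ) (t : E)
    (F : E → ℂ) :
    ∫ x, (a * K.indicator (fun _ ↦ (1 : ℂ)) x) * conj (a * K.indicator (fun _ ↦ (1 : ℂ)) (x - t)) *
      F x ∂μ = (a : ℂ) ^ 2 * ∫ x in K ∩ (fun x ↦ x - t) ⁻¹' K, F x ∂μ := by
  rw [← integral_indicator (hK.inter (measurable_sub_const t hK)), ← integral_const_mul]
  refine integral_congr_ae (.of_forall fun x ↦ ?_)
  by_cases hx : x ∈ K <;> by_cases hxt : x - t ∈ K <;> simp [hx, hxt, pow_two]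

end Window

section Cylinder

open Set Filter Topology
open scoped FourierTransform

variable {n : ℕ}

/-- The functional which the frequency `v` induces on the horizontal hyperplane, i.e. on the second
factor of `consChart n`. -/
noncomputable def horizontalPart (n : ℕ) (v : EuclideanSpace ℝ (Fin (n + 1))) :
    StrongDual ℝ (Fin n → ℝ) :=
  innerSL ℝ v ∘L ((consChart n).symm : ℝ × (Fin n → ℝ) →L[ℝ] EuclideanSpace ℝ (Fin (n + 1))) ∘L
    .inr ℝ ℝ (Fin n → ℝ)

theorem inner_consChart_symm (v : EuclideanSpace ℝ (Fin (n + 1))) (p : ℝ × (Fin n → ℝ)) :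
    ⟪v, (consChart n).symm p⟫_ℝ = v 0 * p.1 + horizontalPart n v p.2 := by
  have hvert : (consChart n).symm (1, 0) = EuclideanSpace.single 0 1 := by
    refine (consChart n).symm_apply_eq.2 (Prod.ext ?_ (funext fun k ↦ ?_))
    · simp [consChart_fst]
    · simp [consChart, Fin.tail]
  have happ := apply_prodMk (innerSL ℝ v ∘L
    ((consChart n).symm : ℝ × (Fin n → ℝ) →L[ℝ] EuclideanSpace ℝ (Fin (n + 1)))) p.1 p.2
  simpa [horizontalPart, hvert, EuclideanSpace.inner_single_right] using happ

theorem horizontalPart_smul_single_add (s : ℝ) (w : EuclideanSpace ℝ (Fin (n + 1))) :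
    horizontalPart n (s • EuclideanSpace.single 0 1 + w) = horizontalPart n w := by
  ext1 y
  have hy : ((consChart n).symm (0, y)) 0 = 0 := by
    rw [← consChart_fst, ContinuousLinearEquiv.apply_symm_apply]
  simp [horizontalPart, EuclideanSpace.inner_single_left, hy]

theorem continuous_horizontalPart : Continuous (horizontalPart n) := by
  unfold horizontalPart
  fun_prop

theorem horizontalPart_zero : horizontalPart n 0 = 0 := by
  simp [horizontalPart]

theorem norm_smul_single_add_le (s : ℝ) (w : EuclideanSpace ℝ (Fin (n + 1))) :
    ‖s • EuclideanSpace.single 0 1 + w‖ ≤ |s + w 0| + 2 * ‖w‖ := by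
  have hw : |w 0| ≤ ‖w‖ := PiLp.norm_apply_le w 0
  calc ‖s • EuclideanSpace.single 0 1 + w‖ ≤ |s| + ‖w‖ := by
        simpa [norm_smul] using norm_add_le (s • EuclideanSpace.single (0 : Fin (n + 1)) (1 : ℝ)) w
    _ ≤ (|s + w 0| + |w 0|) + ‖w‖ := by simpa using abs_sub (s + w 0) (w 0)
    _ ≤ |s + w 0| + 2 * ‖w‖ := by linarith

theorem setIntegral_inter_exp_inner (K : Set (EuclideanSpace ℝ (Fin (n + 1))))
    (t lam : EuclideanSpace ℝ (Fin (n + 1))) :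
    ∫ x in K ∩ (fun x ↦ x - t) ⁻¹' K, Complex.exp (-(2 * π * Complex.I * (⟪lam, x⟫_ℝ : ℂ))) =
      ∫ p in consChart n '' K ∩ (fun p ↦ p - consChart n t) ⁻¹' (consChart n '' K),
        (𝐞 (-lam 0 * p.1 + (-horizontalPart n lam) p.2) : ℂ) := by
  have hpre : consChart n ⁻¹' (consChart n '' K ∩
      (fun p ↦ p - consChart n t) ⁻¹' (consChart n '' K)) = K ∩ (fun x ↦ x - t) ⁻¹' K := by
    ext x
    simp [← map_sub]
  rw [← (measurePreserving_consChart n).setIntegral_preimage_emb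
    (consChart n).toHomeomorph.measurableEmbedding, hpre]
  congr 1 with x
  have hx := inner_consChart_symm lam (consChart n x)
  rw [ContinuousLinearEquiv.symm_apply_apply] at hx
  rw [Real.fourierChar_apply, hx, neg_apply]
  congr 1
  push_cast
  ring

theorem exists_cylinder_of_eventually
    {Q : ((ℝ × (Fin n → ℝ)) × StrongDual ℝ (Fin n → ℝ)) × ℝ → Prop}
    (hQ : ∀ᶠ p in 𝓝 0 ×ˢ cocompact ℝ, Q p) :
    ∃ ε > 0, ∃ R > 0, ∃ δ > 0, ∀ t : EuclideanSpace ℝ (Fin (n + 1)), ‖t‖ < ε →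
      ∀ (s : ℝ) (w lam : EuclideanSpace ℝ (Fin (n + 1))), ‖w‖ < 2 * δ →
        lam = s • EuclideanSpace.single 0 1 + w → R ≤ ‖lam‖ →
        Q ((consChart n t, -horizontalPart n lam), -lam 0) := by
  obtain ⟨P, hP, P', hP', hPQ⟩ := eventually_prod_iff.1 hQ
  have hcont : Continuous fun q : EuclideanSpace ℝ (Fin (n + 1)) × EuclideanSpace ℝ (Fin (n + 1)) ↦
      (consChart n q.1, -horizontalPart n q.2) :=
    ((consChart n).continuous.comp continuous_fst).prodMk
      (continuous_horizontalPart.comp continuous_snd).neg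
  have hPcomp := (hcont.tendsto' 0 0 (by simp [horizontalPart_zero])).eventually hP
  obtain ⟨ε, hε, hPε⟩ := Metric.eventually_nhds_iff.1 hPcomp
  rw [← Metric.cobounded_eq_cocompact, (hasBasis_cobounded_norm (E := ℝ)).eventually_iff] at hP'
  obtain ⟨R, -, hR⟩ := hP'
  refine ⟨ε, hε, |R| + 2 * ε, by positivity, ε / 2, by positivity, ?_⟩
  rintro t ht s w _ hw rfl hlam
  refine hPQ ?_ (hR ?_)
  · rw [horizontalPart_smul_single_add]
    refine hPε (y := (t, w)) ?_
    rw [dist_zero_right, Prod.norm_mk]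
    exact max_lt ht (by linarith)
  · rw [mem_ofPred_eq, norm_neg]
    have hnorm := hlam.trans (norm_smul_single_add_le s w)
    simp only [PiLp.add_apply, PiLp.smul_apply, PiLp.single_apply, ↓reduceIte, smul_eq_mul, mul_one,
      Real.norm_eq_abs]
    linarith [le_abs_self R]

end Cylinder

section AsymmetricPolytopes

open Set Filter Topology
open scoped FourierTransform

theorem interior_nonempty_of_convex_of_measure_pos {E : Type*} [NormedAddCommGroup E]
    [NormedSpace ℝ E] [FiniteDimensional ℝ E] [MeasurableSpace E] [BorelSpace E] (μ : Measure E)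
    [μ.IsAddHaarMeasure] {K : Set E} (hK : Convex ℝ K) (hpos : 0 < μ K) :
    (interior K).Nonempty := by
  by_contra hempty
  have hsub : K ⊆ frontier K := by
    rw [frontier, not_nonempty_iff_eq_empty.1 hempty, sdiff_empty]
    exact subset_closure
  exact hpos.ne' (measure_mono_null hsub (hK.addHaar_frontier μ))

theorem volume_image_linearIsometryEquiv {E : Type*} [NormedAddCommGroup E] [InnerProductSpace ℝ E]
    [FiniteDimensional ℝ E] [MeasurableSpace E] [BorelSpace E] (T : E ≃ₗᵢ[ℝ] E) (s : Set E) :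
    volume (T '' s) = volume s := by
  rw [T.image_eq_preimage_symm]
  exact T.symm.measurePreserving.measure_preimage_emb T.symm.toHomeomorph.measurableEmbedding s

theorem exists_linearIsometryEquiv_eventually_setIntegral_inter_ne_zero {n : ℕ}
    {s : Set (EuclideanSpace ℝ (Fin (n + 1)))} (hs : s.Finite)
    (hpos : 0 < volume (convexHull ℝ s))
    (hsymm : ¬∃ c, (fun y ↦ c - y) '' convexHull ℝ s = (fun y ↦ y - c) '' convexHull ℝ s) :
    ∃ T : EuclideanSpace ℝ (Fin (n + 1)) ≃ₗᵢ[ℝ] EuclideanSpace ℝ (Fin (n + 1)),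
      ∀ᶠ p : ((ℝ × (Fin n → ℝ)) × StrongDual ℝ (Fin n → ℝ)) × ℝ in 𝓝 0 ×ˢ cocompact ℝ,
        ∫ x in consChart n '' (T '' convexHull ℝ s) ∩
            (fun x ↦ x - p.1.1) ⁻¹' (consChart n '' (T '' convexHull ℝ s)),
          (𝐞 (p.2 * x.1 + p.1.2 x.2) : ℂ) ≠ 0 := by
  have hne := interior_nonempty_of_convex_of_measure_pos volume (convex_convexHull ℝ s) hpos
  obtain ⟨P, hnorm, hpar, l, h, hslab, htight⟩ := exists_tight_slab_of_interior_nonempty hs hne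
  let φ : P → StrongDual ℝ (EuclideanSpace ℝ (Fin (n + 1))) := Subtype.val
  have hbdd : Bornology.IsBounded (slab φ l h) :=
    hslab ▸ isBounded_convexHull.2 hs.isBounded
  rw [hslab] at hne hsymm htight
  have hinj := injective_pi_of_isBounded_slab (hne.mono interior_subset) hbdd
  have hlh (j : P) : l j < h j :=
    lt_of_interior_slab_nonempty (norm_ne_zero_iff.1 (hnorm j ▸ one_ne_zero)) hne
  choose T hT using fun f ↦ exists_linearIsometryEquiv_isSlicingChart (hnorm f)
  obtain ⟨i, hi⟩ := (midpointPrekopaLeindler_euclideanSpace (n + 1)).exists_sectionVolume_ne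
    hT hpar hinj hne (fun j ↦ (htight j).1.1) (fun j ↦ (htight j).2.1) hsymm
  refine ⟨T i, ?_⟩
  rw [hslab]
  rw [image_image]
  exact (hT i).eventually_setIntegral_image_slab_inter_ne_zero hpar hinj hlh hi

end AsymmetricPolytopes

/-- Let `Ω ⊆ ℝ^d` (`d ≥ 2`) be a compact convex polytope of positive
measure which is not centrally symmetric. Then after applying a suitable invertible affine
transformation `T` to `Ω`, there exist `ε > 0`, `R > 0`, `δ > 0` such that for all `t` with
`|t| < ε` and all `λ ∈ S(2δ) \ B_R(0)` (where `S(r) = {s e₁ + w : s ∈ ℝ, |w| < r}`), the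
short-time Fourier transform `V_g g(t, λ)` of the window `g = |TΩ|^{-1/2} χ_{TΩ}` is
nonzero. -/
theorem stft_nonvanishing_in_cylinder (d : ℕ) (hd : 2 ≤ d)
    (S : Finset (EuclideanSpace ℝ (Fin d)))
    (Ω : Set (EuclideanSpace ℝ (Fin d)))
    (hΩ : Ω = convexHull ℝ (S : Set (EuclideanSpace ℝ (Fin d))))
    (hvol : 0 < volume Ω)
    (hnonsym : ¬ ∃ c : EuclideanSpace ℝ (Fin d),
      (fun y => c - y) '' Ω = (fun y => y - c) '' Ω) :
    ∃ T : EuclideanSpace ℝ (Fin d) ≃ᵃ[ℝ] EuclideanSpace ℝ (Fin d),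
      ∃ ε > (0:ℝ), ∃ R > (0:ℝ), ∃ δ > (0:ℝ),
        ∀ Ω' : Set (EuclideanSpace ℝ (Fin d)), Ω' = T '' Ω →
          ∀ g : EuclideanSpace ℝ (Fin d) → ℂ,
            g = (fun x => (((volume Ω').toReal ^ (-(1:ℝ)/2) : ℝ) : ℂ) *
              Set.indicator Ω' (fun _ => (1:ℂ)) x) →
          ∀ t : EuclideanSpace ℝ (Fin d), ‖t‖ < ε →
            ∀ lam : EuclideanSpace ℝ (Fin d),
              (∃ s : ℝ, ∃ w : EuclideanSpace ℝ (Fin d), ‖w‖ < 2 * δ ∧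
                lam = s • EuclideanSpace.single (⟨0, by omega⟩ : Fin d) (1:ℝ) + w) →
              lam ∉ Metric.ball (0 : EuclideanSpace ℝ (Fin d)) R →
              (∫ x : EuclideanSpace ℝ (Fin d),
                  g x * conj (g (x - t)) *
                    Complex.exp (-(2 * π * Complex.I * (⟪lam, x⟫_ℝ : ℂ)))) ≠ 0 := by
  subst hΩ
  obtain ⟨n, rfl⟩ : ∃ n, d = n + 1 := ⟨d - 1, by omega⟩
  obtain ⟨T, hT⟩ := exists_linearIsometryEquiv_eventually_setIntegral_inter_ne_zero
    S.finite_toSet hvol hnonsym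
  obtain ⟨ε, hε, R, hR, δ, hδ, hne⟩ := exists_cylinder_of_eventually hT
  refine ⟨T.toLinearEquiv.toAffineEquiv, ε, hε, R, hR, δ, hδ, ?_⟩
  rintro Ω' rfl g rfl t ht _ ⟨s, w, hw, rfl⟩ hlam
  have hcompact : IsCompact (T '' convexHull ℝ (S : Set (EuclideanSpace ℝ (Fin (n + 1))))) :=
    (S.finite_toSet.isCompact_convexHull ℝ).image T.continuous
  have hvolT : 0 < volume.real (T '' convexHull ℝ (S : Set (EuclideanSpace ℝ (Fin (n + 1))))) :=
    ENNReal.toReal_pos ((volume_image_linearIsometryEquiv T _).trans_ne hvol.ne')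
      hcompact.measure_lt_top.ne
  refine (integral_window_mul_conj_translate volume hcompact.measurableSet _ t _).trans_ne ?_
  refine mul_ne_zero (pow_ne_zero 2 (ofReal_ne_zero.2 (Real.rpow_pos_of_pos hvolT _).ne')) ?_
  rw [setIntegral_inter_exp_inner]
  exact hne t ht s w _ hw rfl (by simpa using hlam)
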